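/- arXiv:2507.10037 — 2 statements merged into one kernel-verified Lean document; each statement's English description precedes it below -/
import Mathlib

section
/- Let c = 1/99. For any ε > 0 there exists n₀(ε) such that the following holds for all n ≥ n₀(ε): if G is a graph on n vertices that is ε-far from every disjoint union of cliques, then sp*(G) ≥ (1/2) n^(1+c). -/
-- The adjacency matrix of a simple graph, over `ℝ`.
open scoped Classical in
noncomputable def adjMat {V : Type*} (G : SimpleGraph V) : Matrix V V ℝ :=
  Matrix.of fun i j => if G.Adj i j then (1 : ℝ) else 0

-- `sp*(G)`: the SDP relaxation of the surplus.
noncomputable def spStar {V : Type*} [Fintype V] (G : SimpleGraph V) : ℝ :=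
  sSup {x : ℝ | ∃ M : Matrix V V ℝ, M.PosSemidef ∧ (∀ i, M i i ≤ 1) ∧
    x = (1 / 2) * ∑ i, ∑ j, (-(adjMat G)) i j * M i j}

-- A graph is a disjoint union of cliques iff every connected component is complete.
def IsUnionOfCliques {V : Type*} (G : SimpleGraph V) : Prop :=
  ∀ u v : V, G.Reachable u v → u ≠ v → G.Adj u v

-- Two graphs on `n` vertices are `ε`-close if one can add or delete at most `ε n ^ 2`
-- edges of `G` to obtain a graph isomorphic to `H`.
def EpsClose {n : ℕ} (ε : ℝ) (G H : SimpleGraph (Fin n)) : Prop :=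
  ∃ G' : SimpleGraph (Fin n), Nonempty (G' ≃g H) ∧
    ((symmDiff G.edgeSet G'.edgeSet).ncard : ℝ) ≤ ε * (n : ℝ) ^ 2

-- `G` is `ε`-far from every disjoint union of cliques.
def FarFromCliqueUnions {n : ℕ} (ε : ℝ) (G : SimpleGraph (Fin n)) : Prop :=
  ∀ H : SimpleGraph (Fin n), IsUnionOfCliques H → ¬ EpsClose ε G H

/-
Suppose `sp*(G) < ε n d / 16` with `d = n ^ (1/6)`. Minimising `⟨A_G + d, M⟩` over the feasible
matrices `M`, complementary slackness says that deleting the few vertices with `M i i = 1`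
leaves an adjacency matrix `A` with `-d ≤ A`. Let `P` be the part of `A` carried by its large
eigenvalues, so `P ≤ A + d`. As `A ⊙ A = A` and `A` has zero diagonal, the Schur product theorem
gives `P ⊙ P ≤ A + d²`. Comparing traces, too large a sum of top eigenvalues would force an even
larger one at a lower threshold, and by repeated squaring would eventually exceed `n d`,
although `P ≤ A + d` forces `tr P ≤ n d` at every threshold. Hence `A` is `o(n²)`-close, in
squared Frobenius norm, to a positive semidefinite `P ≤ A + d` of bounded rank.

Pigeonholing the Gram vectors of `P` shows that all but `o(n)` of its diagonal entries are at most
`1.01`: many nearly equal long vectors would give a block of entries above `1`, against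
`P ≤ A + d`. When the diagonal entries are at most `1.01`, the Gram vectors of an induced path on
three vertices cannot reproduce its adjacencies approximately, so each such path contains an entry
where `A` and `P` differ much. There are thus few induced paths, and clustering greedily around
pivots edits `G` into a disjoint union of cliques.
-/

open Finset
open scoped Matrix MatrixOrder

section PosSemidef

variable {V : Type*} [Fintype V]

lemma posSemidef_iff_isSymm_and_dotProduct_mulVec {M : Matrix V V ℝ} :
    M.PosSemidef ↔ M.IsSymm ∧ ∀ x : V → ℝ, 0 ≤ x ⬝ᵥ M *ᵥ x := by
  simp only [Matrix.posSemidef_iff_dotProduct_mulVec, Matrix.IsHermitian,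
    Matrix.conjTranspose_eq_transpose_of_trivial, Matrix.IsSymm, star_trivial]

lemma dotProduct_mulVec_mono {P Q : Matrix V V ℝ} (h : P ≤ Q) (x : V → ℝ) :
    x ⬝ᵥ P *ᵥ x ≤ x ⬝ᵥ Q *ᵥ x := by
  have := (Matrix.le_iff.1 h).dotProduct_mulVec_nonneg x
  simpa [Matrix.sub_mulVec, dotProduct_sub] using this

lemma trace_mono {P Q : Matrix V V ℝ} (h : P ≤ Q) : P.trace ≤ Q.trace := by
  simpa [Matrix.trace_sub] using (Matrix.le_iff.1 h).trace_nonneg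

lemma trace_mul_vecMulVec_self (B : Matrix V V ℝ) (x : V → ℝ) :
    (B * Matrix.vecMulVec x x).trace = x ⬝ᵥ B *ᵥ x := by
  rw [Matrix.mul_vecMulVec, Matrix.trace_vecMulVec, dotProduct_comm]

omit [Fintype V] in
lemma abs_apply_le_one_of_posSemidef [Finite V] {M : Matrix V V ℝ} (hM : M.PosSemidef)
    (hdiag : ∀ i, M i i ≤ 1) (i j : V) : |M i j| ≤ 1 := by
  classical
  cases nonempty_fintype V
  have hsymm : M j i = M i j := (posSemidef_iff_isSymm_and_dotProduct_mulVec.1 hM).1.apply i j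
  have hadd := hM.dotProduct_mulVec_nonneg (Pi.single i 1 + Pi.single j 1)
  have hsub := hM.dotProduct_mulVec_nonneg (Pi.single i 1 - Pi.single j 1)
  simp only [star_trivial, Matrix.mulVec_add, Matrix.mulVec_sub, Matrix.mulVec_single_one,
    add_dotProduct, sub_dotProduct, dotProduct_add, dotProduct_sub, single_one_dotProduct,
    Matrix.col_apply, hsymm] at hadd hsub
  rw [abs_le]
  constructor <;> linarith [hdiag i, hdiag j]

omit [Fintype V] in
lemma isCompact_setOf_posSemidef_diag_le_one [Finite V] :
    IsCompact {M : Matrix V V ℝ | M.PosSemidef ∧ ∀ i, M i i ≤ 1} := by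
  classical
  cases nonempty_fintype V
  have hbox : IsCompact (Set.pi Set.univ fun _ : V => Set.pi Set.univ fun _ : V =>
      Set.Icc (-1 : ℝ) 1) :=
    isCompact_univ_pi fun _ => isCompact_univ_pi fun _ => isCompact_Icc
  refine hbox.of_isClosed_subset (X := Matrix V V ℝ) ?_
    fun M hM i _ j _ => abs_le.1 (abs_apply_le_one_of_posSemidef hM.1 hM.2 i j)
  simp only [posSemidef_iff_isSymm_and_dotProduct_mulVec, Set.ofPred_and, Set.ofPred_forall]
  refine ((isClosed_eq (by fun_prop) (by fun_prop)).inter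
    (isClosed_iInter fun x => isClosed_le (by fun_prop) (by fun_prop))).inter
    (isClosed_iInter fun i => isClosed_le (by fun_prop) (by fun_prop))

lemma exists_posSemidef_diag_le_one_isMinOn (B : Matrix V V ℝ) :
    ∃ M : Matrix V V ℝ, (M.PosSemidef ∧ ∀ i, M i i ≤ 1) ∧
      ∀ N : Matrix V V ℝ, N.PosSemidef → (∀ i, N i i ≤ 1) → (B * M).trace ≤ (B * N).trace := by
  have hcont : Continuous fun M : Matrix V V ℝ => (B * M).trace := by fun_prop
  obtain ⟨M, hM, hmin⟩ := isCompact_setOf_posSemidef_diag_le_one.exists_isMinOn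
    ⟨0, Matrix.PosSemidef.zero, by simp⟩ hcont.continuousOn
  exact ⟨M, hM, fun N hN hN1 => hmin ⟨hN, hN1⟩⟩

/- Complementary slackness: while `t > 0` is small, `M + t x xᵀ` stays feasible for every `x`
supported where the diagonal constraint is slack, so minimality of `M` gives `xᵀ B x ≥ 0`. -/
lemma exists_posSemidef_trace_mul_nonpos_and_dotProduct_mulVec_nonneg (B : Matrix V V ℝ) :
    ∃ M : Matrix V V ℝ, M.PosSemidef ∧ (∀ i, M i i ≤ 1) ∧ (B * M).trace ≤ 0 ∧
      ∀ x : V → ℝ, (∀ i, M i i = 1 → x i = 0) → 0 ≤ x ⬝ᵥ B *ᵥ x := by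
  obtain ⟨M, ⟨hM, hM1⟩, hmin⟩ := exists_posSemidef_diag_le_one_isMinOn B
  refine ⟨M, hM, hM1, by simpa using hmin 0 Matrix.PosSemidef.zero (by simp), fun x hx => ?_⟩
  have hfeasible : ∀ᶠ t : ℝ in nhdsWithin 0 (Set.Ioi 0), ∀ i, M i i + t * (x i * x i) ≤ 1 := by
    refine Filter.eventually_all.2 fun i => ?_
    rcases (hM1 i).eq_or_lt with hi | hi
    · simp [hx i hi, hi]
    · have hlim : Filter.Tendsto (fun t : ℝ => M i i + t * (x i * x i)) (nhds 0) (nhds (M i i)) :=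
        Continuous.tendsto' (by fun_prop) _ _ (by simp)
      exact ((hlim.eventually_lt_const hi).filter_mono nhdsWithin_le_nhds).mono fun _ => le_of_lt
  obtain ⟨t, ht, ht0⟩ := (hfeasible.and self_mem_nhdsWithin).exists
  have hle := hmin (M + t • Matrix.vecMulVec x x)
    (hM.add ((by simpa using Matrix.posSemidef_vecMulVec_self_star x :
      (Matrix.vecMulVec x x).PosSemidef).smul (le_of_lt ht0)))
    (fun i => by simpa [Matrix.vecMulVec_apply] using ht i)
  rw [mul_add, Matrix.trace_add, Matrix.mul_smul, Matrix.trace_smul, trace_mul_vecMulVec_self,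
    le_add_iff_nonneg_right, smul_eq_mul] at hle
  exact nonneg_of_mul_nonneg_right hle ht0

end PosSemidef

section Surplus

variable {V : Type*} (G : SimpleGraph V)

lemma adjMat_apply [DecidableRel G.Adj] (i j : V) :
    adjMat G i j = if G.Adj i j then 1 else 0 := by
  simp [adjMat]

lemma adjMat_eq_zero_or_one (i j : V) : adjMat G i j = 0 ∨ adjMat G i j = 1 := by
  classical
  rw [adjMat_apply]
  split_ifs <;> simp

lemma adjMat_le_one (i j : V) : adjMat G i j ≤ 1 := by
  rcases adjMat_eq_zero_or_one G i j with h | h <;> simp only [h, zero_le_one, le_refl]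

lemma adjMat_apply_self (i : V) : adjMat G i i = 0 := by
  classical
  simp [adjMat_apply]

lemma adjMat_hadamard_self : adjMat G ⊙ adjMat G = adjMat G := by
  ext i j
  rcases adjMat_eq_zero_or_one G i j with h | h <;> simp [h]

lemma adjMat_isHermitian : (adjMat G).IsHermitian := by
  classical
  ext i j
  simp [adjMat_apply, G.adj_comm]

variable [Fintype V]

lemma neg_trace_adjMat_mul_le_two_mul_spStar {M : Matrix V V ℝ} (hM : M.PosSemidef)
    (hdiag : ∀ i, M i i ≤ 1) : -(adjMat G * M).trace ≤ 2 * spStar G := by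
  classical
  have hbdd : BddAbove {x : ℝ | ∃ M : Matrix V V ℝ, M.PosSemidef ∧ (∀ i, M i i ≤ 1) ∧
      x = (1 / 2) * ∑ i, ∑ j, (-(adjMat G)) i j * M i j} := by
    refine ⟨(1 / 2) * ∑ _i : V, ∑ _j : V, 1, ?_⟩
    rintro _ ⟨N, hN, hN1, rfl⟩
    gcongr with i _ j _
    have hij := abs_le.1 (abs_apply_le_one_of_posSemidef hN hN1 i j)
    rcases adjMat_eq_zero_or_one G i j with h | h <;> simp only [Matrix.neg_apply, h] <;> linarith
  have hle : (1 / 2) * ∑ i, ∑ j, (-(adjMat G)) i j * M i j ≤ spStar G :=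
    le_csSup hbdd ⟨M, hM, hdiag, rfl⟩
  have htrace : ∑ i, ∑ j, (-(adjMat G)) i j * M i j = -(adjMat G * M).trace := by
    have hMT : Mᵀ = M := (posSemidef_iff_isSymm_and_dotProduct_mulVec.1 hM).1
    simp_rw [← Matrix.hadamard_apply, Matrix.sum_hadamard_eq, hMT, Matrix.neg_mul,
      Matrix.trace_neg]
  linarith

variable [DecidableEq V]

lemma dotProduct_mulVec_adjMat_induce (U : Finset V) (x : V → ℝ) :
    x ⬝ᵥ adjMat (G.induce (U : Set V)).spanningCoe *ᵥ x =
      (fun i => if i ∈ U then x i else 0) ⬝ᵥ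
        adjMat G *ᵥ (fun i => if i ∈ U then x i else 0) := by
  classical
  simp only [dotProduct, Matrix.mulVec, adjMat, Matrix.of_apply]
  refine sum_congr rfl fun i _ => ?_
  by_cases hi : i ∈ U
  · simp only [hi, if_true]
    congr 1
    refine sum_congr rfl fun j _ => ?_
    by_cases hj : j ∈ U <;> simp [hi, hj]
  · simp [hi]

lemma exists_finset_card_compl_le_and_adjMat_induce_posSemidef {d : ℝ} (hd : 0 ≤ d) :
    ∃ U : Finset V, d * #Uᶜ ≤ 2 * spStar G ∧
      0 ≤ adjMat (G.induce (U : Set V)).spanningCoe + d • (1 : Matrix V V ℝ) := by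
  obtain ⟨M, hM, hM1, htrace, hslack⟩ :=
    exists_posSemidef_trace_mul_nonpos_and_dotProduct_mulVec_nonneg (adjMat G + d • 1)
  refine ⟨univ.filter fun i => M i i ≠ 1, ?_, Matrix.nonneg_iff_posSemidef.2 <|
    posSemidef_iff_isSymm_and_dotProduct_mulVec.2 ⟨?_, fun x => ?_⟩⟩
  · have hcard : (#(univ.filter fun i => M i i ≠ 1)ᶜ : ℝ) ≤ M.trace := by
      rw [compl_filter, card_filter]
      push_cast
      exact sum_le_sum fun i _ => by
        have := hM.diag_nonneg (i := i)
        by_cases hi : M i i = 1 <;> simp [hi, this]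
    rw [add_mul, Matrix.trace_add, Matrix.smul_mul, one_mul, Matrix.trace_smul, smul_eq_mul]
      at htrace
    linarith [neg_trace_adjMat_mul_le_two_mul_spStar G hM hM1, mul_le_mul_of_nonneg_left hcard hd]
  · exact (adjMat_isHermitian _).add (Matrix.isHermitian_one.smul (IsSelfAdjoint.all d))
  · set U := univ.filter fun i => M i i ≠ 1
    have hrestrict := hslack (fun i => if i ∈ U then x i else 0) (by simp +contextual [U])
    rw [Matrix.add_mulVec, dotProduct_add, Matrix.smul_mulVec, Matrix.one_mulVec, dotProduct_smul,
      smul_eq_mul] at hrestrict ⊢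
    rw [dotProduct_mulVec_adjMat_induce]
    refine hrestrict.trans (add_le_add_right (mul_le_mul_of_nonneg_left ?_ hd) _)
    exact sum_le_sum fun i _ => by by_cases hi : i ∈ U <;> simp [hi, mul_self_nonneg]

end Surplus

section Spectral

variable {V : Type*}

lemma hadamard_self_mono {P B : Matrix V V ℝ} (hP : 0 ≤ P) (h : P ≤ B) : P ⊙ P ≤ B ⊙ B := by
  have hB : 0 ≤ B := hP.trans h
  rw [Matrix.nonneg_iff_posSemidef] at hP hB
  have hsplit : B ⊙ B - P ⊙ P = (B - P) ⊙ B + P ⊙ (B - P) := by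
    ext i j
    simp only [Matrix.sub_apply, Matrix.add_apply, Matrix.hadamard_apply]
    ring
  rw [Matrix.le_iff] at h ⊢
  rw [hsplit]
  exact (h.hadamard hB).add (hP.hadamard h)

variable [Fintype V]

lemma sum_sq_eq_trace_mul_self {A : Matrix V V ℝ} (hA : A.IsHermitian) :
    ∑ i, ∑ j, A i j ^ 2 = (A * A).trace := by
  have hAT : Aᵀ = A := hA
  simp_rw [sq, ← Matrix.hadamard_apply, Matrix.sum_hadamard_eq, hAT]

lemma sq_trace_le_card_mul_trace_hadamard_self (P : Matrix V V ℝ) :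
    P.trace ^ 2 ≤ Fintype.card V * (P ⊙ P).trace := by
  simpa [Matrix.trace, Matrix.hadamard_apply, ← sq] using
    sq_sum_le_card_mul_sum_sq (s := univ) (f := fun i => P i i)

variable [DecidableEq V]

lemma trace_cfc {A : Matrix V V ℝ} (hA : A.IsHermitian) (f : ℝ → ℝ) :
    (cfc f A).trace = ∑ i, f (hA.eigenvalues i) := by
  rw [hA.cfc_eq, Matrix.IsHermitian.cfc, Unitary.conjStarAlgAut_apply, Matrix.trace_mul_cycle,
    Unitary.coe_star_mul_self, one_mul, Matrix.trace_diagonal]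
  simp

lemma rank_cfc {A : Matrix V V ℝ} (hA : A.IsHermitian) (f : ℝ → ℝ) :
    (cfc f A).rank = #{i | f (hA.eigenvalues i) ≠ 0} := by
  rw [hA.cfc_eq, Matrix.IsHermitian.cfc, Unitary.conjStarAlgAut_apply,
    ← Unitary.coe_star, Matrix.rank_mul_eq_left_of_isUnit_det _ _
      ((Matrix.isUnit_iff_isUnit_det _).1 (Unitary.isUnit_coe (U := star hA.eigenvectorUnitary))),
    Matrix.rank_mul_eq_right_of_isUnit_det _ _
      ((Matrix.isUnit_iff_isUnit_det _).1 (Unitary.isUnit_coe (U := hA.eigenvectorUnitary))),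
    Matrix.rank_diagonal, Fintype.card_subtype]
  simp

lemma continuousOn_spectrum (A : Matrix V V ℝ) (f : ℝ → ℝ) : ContinuousOn f (spectrum ℝ A) :=
  A.finite_real_spectrum.continuousOn f

lemma isHermitian_cfc (A : Matrix V V ℝ) (f : ℝ → ℝ) : (cfc f A).IsHermitian :=
  cfc_predicate f A

lemma sum_sq_cfc {A : Matrix V V ℝ} (hA : A.IsHermitian) (f : ℝ → ℝ) :
    ∑ i, ∑ j, cfc f A i j ^ 2 = ∑ i, f (hA.eigenvalues i) ^ 2 := by
  rw [sum_sq_eq_trace_mul_self (isHermitian_cfc A f), ← cfc_mul f f A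
    (continuousOn_spectrum A f) (continuousOn_spectrum A f), trace_cfc hA]
  simp_rw [sq]

lemma add_smul_one_eq_cfc {A : Matrix V V ℝ} (hA : A.IsHermitian) (c : ℝ) :
    A + c • 1 = cfc (fun x => x + c) A := by
  rw [cfc_add_const c (fun x => x) A (continuousOn_spectrum A _) hA.isSelfAdjoint,
    cfc_id' ℝ A hA.isSelfAdjoint,
    Algebra.algebraMap_eq_smul_one]

lemma neg_le_of_mem_spectrum {A : Matrix V V ℝ} (hA : A.IsHermitian) {d x : ℝ}
    (hd : 0 ≤ A + d • 1) (hx : x ∈ spectrum ℝ A) : -d ≤ x := by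
  rw [add_smul_one_eq_cfc hA] at hd
  linarith [(cfc_nonneg_iff _ A (continuousOn_spectrum A _) hA.isSelfAdjoint).1 hd x hx]

omit [DecidableEq V] in
lemma exists_eq_mul_transpose_of_posSemidef {P : Matrix V V ℝ} (hP : P.PosSemidef) :
    ∃ Φ : Matrix V (Fin P.rank) ℝ, P = Φ * Φᵀ := by
  classical
  let S := {k // hP.1.eigenvalues k ≠ 0}
  let e : S ≃ Fin P.rank := Fintype.equivFinOfCardEq hP.1.rank_eq_card_non_zero_eigs.symm
  let Ψ : Matrix V S ℝ := .of fun i k =>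
    (hP.1.eigenvectorUnitary : Matrix V V ℝ) i k * √(hP.1.eigenvalues k)
  suffices h : P = Ψ * Ψᵀ from
    ⟨Ψ.submatrix id e.symm, by
      rw [Matrix.transpose_submatrix, Matrix.submatrix_mul_equiv, Matrix.submatrix_id_id, ← h]⟩
  ext i j
  conv_lhs => rw [hP.1.spectral_theorem, Unitary.conjStarAlgAut_apply, Matrix.mul_apply]
  simp only [Matrix.mul_diagonal]
  rw [← sum_subset (subset_univ {k | hP.1.eigenvalues k ≠ 0}) (by simp +contextual),
    Matrix.mul_apply, sum_subtype _ (p := fun k => hP.1.eigenvalues k ≠ 0) (by simp)]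
  refine sum_congr rfl fun k _ => ?_
  have hk := Real.mul_self_sqrt (hP.eigenvalues_nonneg k)
  simp only [Matrix.transpose_apply, Matrix.of_apply, Function.comp_apply,
    RCLike.ofReal_real_eq_id, id, Matrix.star_apply, star_trivial, Ψ]
  linear_combination (hP.1.eigenvectorUnitary : Matrix V V ℝ) i k *
    (hP.1.eigenvectorUnitary : Matrix V V ℝ) j k * -hk

omit [DecidableEq V] in
lemma rank_hadamard_le {P Q : Matrix V V ℝ} (hP : P.PosSemidef) (hQ : Q.PosSemidef) :
    (P ⊙ Q).rank ≤ P.rank * Q.rank := by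
  obtain ⟨Φ, hΦ⟩ := exists_eq_mul_transpose_of_posSemidef hP
  obtain ⟨Ψ, hΨ⟩ := exists_eq_mul_transpose_of_posSemidef hQ
  let Θ : Matrix V (Fin P.rank × Fin Q.rank) ℝ := .of fun i k => Φ i k.1 * Ψ i k.2
  have hΘ : P ⊙ Q = Θ * Θᵀ := by
    ext i j
    rw [Matrix.hadamard_apply, congrFun₂ hΦ i j, congrFun₂ hΨ i j]
    simp only [Matrix.mul_apply, Matrix.transpose_apply, Matrix.of_apply, Fintype.sum_prod_type,
      sum_mul_sum, Θ]
    exact sum_congr rfl fun k _ => sum_congr rfl fun l _ => by ring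
  calc (P ⊙ Q).rank = (Θ * Θᵀ).rank := by rw [hΘ]
    _ ≤ Θ.rank := Matrix.rank_mul_le_left _ _
    _ ≤ _ := by simpa using Matrix.rank_le_card_width Θ

omit [DecidableEq V] in
lemma exists_isIdempotentElem_mul_mul_eq_self_and_trace_eq_rank {Q : Matrix V V ℝ}
    (hQ : Q.IsHermitian) :
    ∃ E : Matrix V V ℝ, Eᴴ = E ∧ IsIdempotentElem E ∧ E * Q * E = Q ∧ E.trace = Q.rank := by
  classical
  have hcont := continuousOn_spectrum Q
  let p : ℝ → ℝ := fun x => if x = 0 then 0 else 1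
  refine ⟨cfc p Q, isHermitian_cfc Q p, ?_, ?_, ?_⟩
  · rw [IsIdempotentElem, ← cfc_mul p p Q (hcont p) (hcont p)]
    congr 1
    ext x
    by_cases hx : x = 0 <;> simp [p, hx]
  · have hmul : cfc p Q * cfc (fun x : ℝ => x) Q * cfc p Q = cfc (fun x : ℝ => x) Q := by
      rw [← cfc_mul p _ Q (hcont p) (hcont _), ← cfc_mul _ p Q (hcont _) (hcont p)]
      congr 1
      ext x
      by_cases hx : x = 0 <;> simp [p, hx]
    rwa [cfc_id' ℝ Q hQ.isSelfAdjoint] at hmul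
  · rw [trace_cfc hQ, hQ.rank_eq_card_non_zero_eigs, Fintype.card_subtype, card_filter]
    push_cast
    exact sum_congr rfl fun i _ => by by_cases hi : hQ.eigenvalues i = 0 <;> simp [p, hi]

/- Compress to the range of `Q`: if `E` is the orthogonal projection onto it, then
`Q = E Q E ≤ E C E + c E`. -/
lemma trace_le_trace_add_mul_rank {Q C : Matrix V V ℝ} {c : ℝ} (hQ : Q.IsHermitian)
    (hC : 0 ≤ C) (h : Q ≤ C + c • 1) : Q.trace ≤ C.trace + c * Q.rank := by
  obtain ⟨E, hEH, hEE, hEQ, hEtr⟩ :=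
    exists_isIdempotentElem_mul_mul_eq_self_and_trace_eq_rank hQ
  have hcompress : Q.trace ≤ (C * E).trace + c * Q.rank := by
    have hpos := ((Matrix.le_iff.1 h).conjTranspose_mul_mul_same E).trace_nonneg
    rw [hEH, mul_sub, sub_mul, hEQ, Matrix.trace_sub, mul_add, add_mul, Matrix.trace_add,
      Matrix.mul_smul, Matrix.smul_mul, mul_one, hEE, Matrix.trace_smul, hEtr, smul_eq_mul,
      Matrix.trace_mul_cycle, hEE, Matrix.trace_mul_comm] at hpos
    linarith
  have hcompl : (C * E).trace ≤ C.trace := by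
    have hpos := ((Matrix.nonneg_iff_posSemidef.1 hC).conjTranspose_mul_mul_same
      (1 - E)).trace_nonneg
    rw [Matrix.conjTranspose_sub, Matrix.conjTranspose_one, hEH, Matrix.trace_mul_cycle,
      hEE.one_sub.eq, sub_mul, one_mul, Matrix.trace_sub, Matrix.trace_mul_comm E] at hpos
    linarith
  linarith

end Spectral

section TopPart

/-- The function `x ↦ x · 1[K ≤ x]`. -/
noncomputable def truncBelow (K x : ℝ) : ℝ := if K ≤ x then x else 0

lemma truncBelow_of_le {K x : ℝ} (h : K ≤ x) : truncBelow K x = x := if_pos h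

lemma truncBelow_of_lt {K x : ℝ} (h : x < K) : truncBelow K x = 0 := if_neg h.not_ge

lemma truncBelow_nonneg {K : ℝ} (hK : 0 ≤ K) (x : ℝ) : 0 ≤ truncBelow K x := by
  rcases lt_or_ge x K with h | h
  · exact (truncBelow_of_lt h).ge
  · exact (hK.trans h).trans_eq (truncBelow_of_le h).symm

variable {V : Type*} [Fintype V] [DecidableEq V]

/-- The part of the Hermitian matrix `A` carried by its eigenvalues `≥ K`. -/
noncomputable def topPart (K : ℝ) (A : Matrix V V ℝ) : Matrix V V ℝ := cfc (truncBelow K) A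

variable {A : Matrix V V ℝ} {K d : ℝ}

lemma topPart_nonneg (hK : 0 ≤ K) : 0 ≤ topPart K A :=
  cfc_nonneg fun x _ => truncBelow_nonneg hK x

lemma topPart_posSemidef (hK : 0 ≤ K) : (topPart K A).PosSemidef :=
  Matrix.nonneg_iff_posSemidef.1 (topPart_nonneg hK)

lemma trace_topPart (hA : A.IsHermitian) :
    (topPart K A).trace = ∑ i, truncBelow K (hA.eigenvalues i) :=
  trace_cfc hA _

lemma topPart_le_add_smul_one (hA : A.IsHermitian) (hd0 : 0 ≤ d) (hd : 0 ≤ A + d • 1) :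
    topPart K A ≤ A + d • 1 := by
  rw [add_smul_one_eq_cfc hA]
  refine cfc_mono (fun x hx => ?_) (continuousOn_spectrum A _) (continuousOn_spectrum A _)
  have := neg_le_of_mem_spectrum hA hd hx
  rcases lt_or_ge x K with h | h
  · rw [truncBelow_of_lt h]; linarith
  · rw [truncBelow_of_le h]; linarith

lemma le_topPart_add_smul_one (hA : A.IsHermitian) (hK : 0 ≤ K) :
    A ≤ topPart K A + K • 1 := by
  have hsum : topPart K A + K • 1 = cfc (fun x => truncBelow K x + K) A := by
    rw [cfc_add_const K _ A (continuousOn_spectrum A _) hA.isSelfAdjoint,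
      Algebra.algebraMap_eq_smul_one, topPart]
  rw [hsum]
  conv_lhs => rw [← cfc_id' ℝ A hA.isSelfAdjoint]
  refine cfc_mono (fun x _ => ?_) (continuousOn_spectrum A _) (continuousOn_spectrum A _)
  rcases lt_or_ge x K with h | h
  · rw [truncBelow_of_lt h]; linarith
  · rw [truncBelow_of_le h]; linarith

lemma mul_rank_topPart_le_trace (hA : A.IsHermitian) (hK : 0 < K) :
    K * (topPart K A).rank ≤ (topPart K A).trace := by
  rw [topPart, rank_cfc hA, trace_cfc hA, card_filter, Nat.cast_sum, mul_sum]
  refine sum_le_sum fun i _ => ?_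
  rcases lt_or_ge (hA.eigenvalues i) K with h | h
  · simp [truncBelow_of_lt h]
  · simp [truncBelow_of_le h, (hK.trans_le h).ne', h]

lemma sum_sq_sub_topPart (hA : A.IsHermitian) :
    ∑ i, ∑ j, (A - topPart K A) i j ^ 2 =
      ∑ i, if hA.eigenvalues i < K then hA.eigenvalues i ^ 2 else 0 := by
  have hsub : A - topPart K A = cfc (fun x => x - truncBelow K x) A := by
    rw [cfc_sub _ _ A (continuousOn_spectrum A _) (continuousOn_spectrum A _),
      cfc_id' ℝ A hA.isSelfAdjoint, topPart]
  rw [hsub, sum_sq_cfc hA]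
  refine sum_congr rfl fun i _ => ?_
  rcases lt_or_ge (hA.eigenvalues i) K with h | h
  · simp [truncBelow_of_lt h, h]
  · simp [truncBelow_of_le h, h.not_gt]

lemma trace_topPart_le_card_mul (hA : A.IsHermitian) (hdiag : ∀ i, A i i = 0) (hd0 : 0 ≤ d)
    (hd : 0 ≤ A + d • 1) : (topPart K A).trace ≤ Fintype.card V * d := by
  have := trace_mono (topPart_le_add_smul_one (K := K) hA hd0 hd)
  simpa [Matrix.trace_add, Matrix.trace_smul, (by simp [Matrix.trace, hdiag] : A.trace = 0),
    mul_comm] using this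

/- If `A ⊙ A = A`, then squaring `P ≤ A + d` entrywise gives `P ⊙ P ≤ A + d²` for the top part
`P` of `A`. Comparing traces on the range of `P ⊙ P`, whose rank is at most `(rank P)²`, bounds
the square of one top trace by another top trace at a different level `K'`. -/
lemma sq_trace_topPart_le (hA : A.IsHermitian) (hAA : A ⊙ A = A) (hdiag : ∀ i, A i i = 0)
    (hd0 : 0 ≤ d) (hd : 0 ≤ A + d • 1) (hK : 0 < K) {K' : ℝ} (hK' : 0 ≤ K') :
    (topPart K A).trace ^ 2 ≤ Fintype.card V *
      ((topPart K' A).trace + (K' + d ^ 2) * ((topPart K A).trace / K) ^ 2) := by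
  set P := topPart K A
  have hP : P.PosSemidef := topPart_posSemidef hK.le
  have hsquare : (A + d • 1) ⊙ (A + d • 1) = A + d ^ 2 • 1 := by
    ext i j
    have hij := congrFun₂ hAA i j
    rw [Matrix.hadamard_apply] at hij
    rcases eq_or_ne i j with rfl | hne
    · simp [hdiag, sq]
    · simp [hne, hij]
  have hcompare : P ⊙ P ≤ topPart K' A + (K' + d ^ 2) • 1 :=
    calc P ⊙ P ≤ (A + d • 1) ⊙ (A + d • 1) :=
          hadamard_self_mono (topPart_nonneg hK.le) (topPart_le_add_smul_one hA hd0 hd)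
      _ = A + d ^ 2 • 1 := hsquare
      _ ≤ topPart K' A + K' • 1 + d ^ 2 • 1 := by gcongr; exact le_topPart_add_smul_one hA hK'
      _ = topPart K' A + (K' + d ^ 2) • 1 := by rw [add_assoc, add_smul]
  have hrank : ((P ⊙ P).rank : ℝ) ≤ (P.trace / K) ^ 2 := by
    have hP_rank : (P.rank : ℝ) ≤ P.trace / K := by
      rw [le_div_iff₀' hK]
      exact mul_rank_topPart_le_trace hA hK
    calc ((P ⊙ P).rank : ℝ) ≤ P.rank * P.rank := mod_cast rank_hadamard_le hP hP
      _ ≤ (P.trace / K) ^ 2 := by rw [← sq]; gcongr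
  calc P.trace ^ 2 ≤ Fintype.card V * (P ⊙ P).trace := sq_trace_le_card_mul_trace_hadamard_self P
    _ ≤ Fintype.card V * ((topPart K' A).trace + (K' + d ^ 2) * (P ⊙ P).rank) := by
      gcongr
      exact trace_le_trace_add_mul_rank (hP.hadamard hP).1 (topPart_nonneg hK') hcompare
    _ ≤ _ := by gcongr

end TopPart

section LeastEigenvalue

variable {V : Type*} [Fintype V] {G : SimpleGraph V} {d : ℝ}

lemma card_pos_of_pow_le (hd1 : 1 ≤ d) (hdn : d ^ 6 ≤ Fintype.card V) :
    (0 : ℝ) < Fintype.card V :=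
  one_pos.trans_le ((one_le_pow₀ hd1).trans hdn)

variable [DecidableEq V]

lemma two_mul_lt_of_lt_trace_topPart (hd1 : 1 ≤ d) (hdn : d ^ 6 ≤ Fintype.card V)
    (hd : 0 ≤ adjMat G + d • 1) {K s : ℝ}
    (hs : 2 * Fintype.card V * s < (topPart K (adjMat G)).trace) : 2 * s < d := by
  have hn := card_pos_of_pow_le hd1 hdn
  have htrace := trace_topPart_le_card_mul (K := K) (adjMat_isHermitian G) (adjMat_apply_self G)
    (zero_le_one.trans hd1) hd
  exact lt_of_mul_lt_mul_left (by linarith) hn.le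

lemma lt_trace_topPart_sq (hd1 : 1 ≤ d) (hdn : d ^ 6 ≤ Fintype.card V)
    (hd : 0 ≤ adjMat G + d • 1) {s : ℝ} (hs0 : 0 < s)
    (hs : 2 * Fintype.card V * s < (topPart (4 * Fintype.card V / s ^ 2) (adjMat G)).trace) :
    2 * Fintype.card V * s ^ 2 <
      (topPart (4 * Fintype.card V / (s ^ 2) ^ 2) (adjMat G)).trace := by
  have hn := card_pos_of_pow_le hd1 hdn
  have hsd := two_mul_lt_of_lt_trace_topPart hd1 hdn hd hs
  set n : ℝ := (Fintype.card V : ℝ)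
  set t := (topPart (4 * n / s ^ 2) (adjMat G)).trace
  set t' := (topPart (4 * n / (s ^ 2) ^ 2) (adjMat G)).trace
  have hd2 : d ^ 2 ≤ 4 * n / (s ^ 2) ^ 2 := by
    rw [le_div_iff₀ (by positivity)]
    calc d ^ 2 * (s ^ 2) ^ 2 = d ^ 2 * s ^ 4 := by ring
      _ ≤ d ^ 2 * d ^ 4 := by gcongr; linarith
      _ = d ^ 6 := by ring
      _ ≤ 4 * n := by linarith
  have hgrowth : t ^ 2 ≤ n * t' + t ^ 2 / 2 :=
    calc t ^ 2 ≤ n * (t' + (4 * n / (s ^ 2) ^ 2 + d ^ 2) * (t / (4 * n / s ^ 2)) ^ 2) :=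
          sq_trace_topPart_le (adjMat_isHermitian G) (adjMat_hadamard_self G)
            (adjMat_apply_self G) (zero_le_one.trans hd1) hd (by positivity) (by positivity)
      _ ≤ n * (t' + (4 * n / (s ^ 2) ^ 2 + 4 * n / (s ^ 2) ^ 2) * (t / (4 * n / s ^ 2)) ^ 2) := by
        gcongr
      _ = n * t' + t ^ 2 / 2 := by field_simp; ring
  have hlower : (2 * n * s) ^ 2 < t ^ 2 := by gcongr
  exact lt_of_mul_lt_mul_left (by linarith : n * (2 * n * s ^ 2) < n * t') hn.le

lemma trace_topPart_le (hd1 : 1 ≤ d) (hdn : d ^ 6 ≤ Fintype.card V)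
    (hd : 0 ≤ adjMat G + d • 1) {s : ℝ} (hs1 : 1 < s) :
    (topPart (4 * Fintype.card V / s ^ 2) (adjMat G)).trace ≤ 2 * Fintype.card V * s := by
  by_contra! hs
  have hiterate : ∀ m : ℕ, 2 * Fintype.card V * s ^ 2 ^ m <
      (topPart (4 * Fintype.card V / (s ^ 2 ^ m) ^ 2) (adjMat G)).trace := by
    intro m
    induction m with
    | zero => simpa using hs
    | succ m ih =>
      rw [pow_succ 2 m, pow_mul]
      exact lt_trace_topPart_sq hd1 hdn hd (by positivity) ih
  obtain ⟨m, hm⟩ := pow_unbounded_of_one_lt d hs1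
  have hbound := two_mul_lt_of_lt_trace_topPart hd1 hdn hd (hiterate m)
  have hmono : s ^ m ≤ s ^ 2 ^ m := pow_le_pow_right₀ hs1.le Nat.lt_two_pow_self.le
  linarith

lemma trace_topPart_div_four_pow_le (hd1 : 1 ≤ d) (hdn : d ^ 6 ≤ Fintype.card V)
    (hd : 0 ≤ adjMat G + d • 1) {J : ℕ} (hJ : J ≠ 0) :
    (topPart (4 * Fintype.card V / 4 ^ J) (adjMat G)).trace ≤ 2 * Fintype.card V * 2 ^ J := by
  have h := trace_topPart_le hd1 hdn hd (one_lt_pow₀ one_lt_two hJ)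
  rwa [← pow_mul, mul_comm J, pow_mul, show (2 : ℝ) ^ 2 = 4 by norm_num] at h

lemma sum_sq_sub_topPart_le_add {A : Matrix V V ℝ} (hA : A.IsHermitian) {K K' : ℝ}
    (hK' : 0 ≤ K') (hK : K' ≤ K) :
    ∑ i, ∑ j, (A - topPart K A) i j ^ 2 ≤
      ∑ i, ∑ j, (A - topPart K' A) i j ^ 2 + K * (topPart K' A).trace := by
  rw [sum_sq_sub_topPart hA, sum_sq_sub_topPart hA, trace_topPart hA, mul_sum, ← sum_add_distrib]
  refine sum_le_sum fun i _ => ?_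
  set x := hA.eigenvalues i
  rcases lt_or_ge x K' with h' | h'
  · simp [h', h'.trans_le hK, truncBelow_of_lt]
  · rw [truncBelow_of_le h', if_neg h'.not_gt, zero_add]
    have hx : 0 ≤ x := hK'.trans h'
    split_ifs with h
    · rw [sq]; gcongr
    · exact mul_nonneg (hK'.trans hK) hx

lemma sum_sq_sub_topPart_le_card_mul_sq {A : Matrix V V ℝ} (hA : A.IsHermitian)
    (hd : 0 ≤ A + d • 1) {K : ℝ} (hK : K ≤ d) :
    ∑ i, ∑ j, (A - topPart K A) i j ^ 2 ≤ Fintype.card V * d ^ 2 := by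
  rw [sum_sq_sub_topPart hA, ← nsmul_eq_mul, ← card_univ]
  refine sum_le_card_nsmul _ _ _ fun i _ => ?_
  have hi := neg_le_of_mem_spectrum hA hd (hA.eigenvalues_mem_spectrum_real i)
  split_ifs with h
  · exact sq_le_sq' hi (h.le.trans hK)
  · positivity

lemma sum_sq_sub_topPart_div_four_pow_le (hd1 : 1 ≤ d) (hdn : d ^ 6 ≤ Fintype.card V)
    (hd : 0 ≤ adjMat G + d • 1) (J : ℕ) :
    ∑ i, ∑ j, (adjMat G - topPart (4 * Fintype.card V / 4 ^ J) (adjMat G)) i j ^ 2 ≤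
      32 * (Fintype.card V : ℝ) ^ 2 / 2 ^ J + Fintype.card V * d ^ 2 := by
  have hA := adjMat_isHermitian G
  have hdescent : ∀ k J : ℕ, 4 * Fintype.card V / 4 ^ (J + k) ≤ d →
      ∑ i, ∑ j, (adjMat G - topPart (4 * Fintype.card V / 4 ^ J) (adjMat G)) i j ^ 2 ≤
        32 * (Fintype.card V : ℝ) ^ 2 / 2 ^ J + Fintype.card V * d ^ 2 := by
    intro k
    induction k with
    | zero =>
      intro J hJ
      exact (sum_sq_sub_topPart_le_card_mul_sq hA hd hJ).trans
        (le_add_of_nonneg_left (by positivity))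
    | succ k ih =>
      intro J hJ
      have htop := trace_topPart_div_four_pow_le hd1 hdn hd J.succ_ne_zero
      set n : ℝ := (Fintype.card V : ℝ)
      calc _ ≤ _ := sum_sq_sub_topPart_le_add (K' := 4 * n / 4 ^ (J + 1)) hA
            (by positivity) (by gcongr <;> norm_num)
        _ ≤ (32 * n ^ 2 / 2 ^ (J + 1) + n * d ^ 2) +
            4 * n / 4 ^ J * (2 * n * 2 ^ (J + 1)) := by
          gcongr
          exact ih (J + 1) (by rwa [add_right_comm, add_assoc])
        _ = 32 * n ^ 2 / 2 ^ J + n * d ^ 2 := by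
          rw [show (4 : ℝ) ^ J = 2 ^ J * 2 ^ J by rw [← mul_pow]; norm_num, pow_succ]
          field_simp
          ring
  obtain ⟨k, hk⟩ := pow_unbounded_of_one_lt (4 * Fintype.card V : ℝ) (by norm_num : (1 : ℝ) < 4)
  refine hdescent k J ?_
  rw [div_le_iff₀ (by positivity)]
  calc (4 * Fintype.card V : ℝ) ≤ 1 * 4 ^ (J + k) := by
        rw [one_mul]
        exact hk.le.trans (pow_le_pow_right₀ (by norm_num) (Nat.le_add_left k J))
    _ ≤ d * 4 ^ (J + k) := by gcongr

lemma exists_low_rank_posSemidef_approx (hd1 : 1 ≤ d) (hdn : d ^ 6 ≤ Fintype.card V)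
    (hd : 0 ≤ adjMat G + d • 1) {J : ℕ} (hJ : J ≠ 0) :
    ∃ P : Matrix V V ℝ, P.PosSemidef ∧ P ≤ adjMat G + d • 1 ∧ P.rank ≤ 8 ^ J ∧
      P.trace ≤ 2 * Fintype.card V * 2 ^ J ∧
      ∑ i, ∑ j, (adjMat G - P) i j ^ 2 ≤
        32 * (Fintype.card V : ℝ) ^ 2 / 2 ^ J + Fintype.card V * d ^ 2 := by
  have hA := adjMat_isHermitian G
  have hn := card_pos_of_pow_le hd1 hdn
  have htrace := trace_topPart_div_four_pow_le hd1 hdn hd hJ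
  refine ⟨topPart (4 * Fintype.card V / 4 ^ J) (adjMat G), topPart_posSemidef (by positivity),
    topPart_le_add_smul_one hA (zero_le_one.trans hd1) hd, ?_, htrace,
    sum_sq_sub_topPart_div_four_pow_le hd1 hdn hd J⟩
  set r := (topPart (4 * Fintype.card V / 4 ^ J) (adjMat G)).rank
  have hrank : 4 * Fintype.card V / 4 ^ J * (r : ℝ) ≤ 2 * Fintype.card V * 2 ^ J :=
    (mul_rank_topPart_le_trace hA (by positivity)).trans htrace
  have hr : (r : ℝ) ≤ 8 ^ J / 2 := by
    rw [div_mul_eq_mul_div, div_le_iff₀ (by positivity), mul_assoc (2 * _) (2 ^ J) (4 ^ J),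
      ← mul_pow, show (2 : ℝ) * 4 = 8 by norm_num] at hrank
    refine le_of_mul_le_mul_left ?_ (by positivity : (0 : ℝ) < 4 * Fintype.card V)
    linarith
  exact_mod_cast hr.trans (half_le_self (by positivity))

end LeastEigenvalue

section Diagonal

lemma exists_subset_card_le_mul_card_and_abs_sub_lt_one {ι S : Type*} [Fintype S] (W : Finset ι)
    (φ : ι → S → ℝ) {m : ℕ} (hφ : ∀ i ∈ W, ∀ k, |φ i k| ≤ m) :
    ∃ X ⊆ W, #W ≤ (2 * m + 1) ^ Fintype.card S * #X ∧
      ∀ i ∈ X, ∀ j ∈ X, ∀ k, |φ i k - φ j k| < 1 := by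
  classical
  let cells : Finset (S → ℤ) := Fintype.piFinset fun _ => Icc (-(m : ℤ)) m
  let cell : ι → S → ℤ := fun i k => ⌊φ i k⌋
  have hcells : #cells = (2 * m + 1) ^ Fintype.card S := by
    have hside : #(Icc (-(m : ℤ)) m) = 2 * m + 1 := by rw [Int.card_Icc]; omega
    rw [Fintype.card_piFinset, prod_const, hside, card_univ]
  have hmaps : ∀ i ∈ W, cell i ∈ cells := fun i hi => Fintype.mem_piFinset.2 fun k => by
    obtain ⟨hlow, hupp⟩ := abs_le.1 (hφ i hi k)
    exact mem_Icc.2 ⟨Int.le_floor.2 (by exact_mod_cast hlow),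
      by exact_mod_cast (Int.floor_le _).trans hupp⟩
  obtain ⟨y, -, hy⟩ := cells.exists_max_image (fun y => #{i ∈ W | cell i = y})
    (card_pos.1 (by rw [hcells]; positivity))
  refine ⟨{i ∈ W | cell i = y}, filter_subset _ _, ?_, fun i hi j hj k => ?_⟩
  · rw [← hcells, mul_comm]
    exact card_le_mul_card_image_of_maps_to hmaps _ hy
  · exact Int.abs_sub_lt_one_of_floor_eq_floor
      (congrFun ((mem_filter.1 hi).2.trans (mem_filter.1 hj).2.symm) k)

/-- The number of cells of side `√(δ / (r + 1))`, hence of squared diameter at most `δ`, used to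
cover the points of squared norm at most `R` in an `r`-dimensional Euclidean space. -/
noncomputable def cellCount (r : ℕ) (R δ : ℝ) : ℕ := (2 * ⌈√(R * (r + 1) / δ)⌉₊ + 1) ^ r

variable {V : Type*}

lemma mul_card_filter_lt_le_sum {ι : Type*} [Fintype ι] {f : ι → ℝ} (hf : ∀ i, 0 ≤ f i) (t : ℝ) :
    t * #{i | t < f i} ≤ ∑ i, f i := by
  rw [mul_comm, ← nsmul_eq_mul]
  calc _ ≤ ∑ i with t < f i, f i := card_nsmul_le_sum _ _ _ fun i hi => (mem_filter.1 hi).2.le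
    _ ≤ ∑ i, f i := sum_le_sum_of_subset_of_nonneg (subset_univ _) fun i _ _ => hf i

lemma two_mul_mul_transpose_self_apply {S : Type*} [Fintype S] (Φ : Matrix V S ℝ) (i j : V) :
    2 * (Φ * Φᵀ) i j = (Φ * Φᵀ) i i + (Φ * Φᵀ) j j - ∑ k, (Φ i k - Φ j k) ^ 2 := by
  simp only [Matrix.mul_apply, Matrix.transpose_apply, mul_sum, ← sum_add_distrib,
    ← sum_sub_distrib]
  exact sum_congr rfl fun k _ => by ring

lemma mul_card_le_of_le_add_smul_one [Finite V] [DecidableEq V] {P A : Matrix V V ℝ} {d θ : ℝ}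
    (hPA : P ≤ A + d • 1) (hA : ∀ i j, A i j ≤ 1) {X : Finset V}
    (hX : ∀ i ∈ X, ∀ j ∈ X, 1 + θ ≤ P i j) (hd : 0 ≤ d) :
    θ * #X ≤ d := by
  cases nonempty_fintype V
  let x : V → ℝ := fun i => if i ∈ X then 1 else 0
  have hform : ∀ B : Matrix V V ℝ, x ⬝ᵥ B *ᵥ x = ∑ i ∈ X, ∑ j ∈ X, B i j := fun B => by
    simp [x, dotProduct, Matrix.mulVec, sum_ite_mem]
  have hlower : (#X : ℝ) * (#X * (1 + θ)) ≤ x ⬝ᵥ P *ᵥ x := by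
    rw [hform, ← nsmul_eq_mul, ← nsmul_eq_mul]
    exact card_nsmul_le_sum _ _ _ fun i hi => card_nsmul_le_sum _ _ _ (hX i hi)
  have hupper : x ⬝ᵥ (A + d • 1) *ᵥ x ≤ #X * (#X + d) := by
    rw [hform, ← nsmul_eq_mul]
    refine sum_le_card_nsmul _ _ _ fun i hi => ?_
    simp only [Matrix.add_apply, Matrix.smul_apply, Matrix.one_apply, sum_add_distrib]
    gcongr
    · simpa using sum_le_card_nsmul X (A i) 1 fun j _ => hA i j
    · simp [hi]
  rcases X.eq_empty_or_nonempty with rfl | hne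
  · simpa using hd
  have hpos : (0 : ℝ) < #X := by exact_mod_cast hne.card_pos
  have := le_of_mul_le_mul_left (hlower.trans ((dotProduct_mulVec_mono hPA x).trans hupper)) hpos
  linarith

variable [Fintype V]

lemma exists_subset_card_le_cellCount_mul_card {P : Matrix V V ℝ} (hP : P.PosSemidef) {r : ℕ}
    (hr : P.rank ≤ r) {R δ : ℝ} (hδ : 0 < δ) {W : Finset V} (hW : ∀ i ∈ W, P i i ≤ R) :
    ∃ X ⊆ W, #W ≤ cellCount r R δ * #X ∧
      ∀ i ∈ X, ∀ j ∈ X, P i i + P j j - δ ≤ 2 * P i j := by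
  classical
  obtain ⟨Φ, hΦ⟩ := exists_eq_mul_transpose_of_posSemidef hP
  set η := √(δ / (r + 1))
  have hη : 0 < η := by positivity
  have hη_sq : (r + 1) * η ^ 2 = δ := by
    rw [Real.sq_sqrt (by positivity)]
    field_simp
  have hbound : ∀ i ∈ W, ∀ k, |Φ i k / η| ≤ ⌈√(R * (r + 1) / δ)⌉₊ := by
    intro i hi k
    have hentry : Φ i k ^ 2 ≤ R :=
      calc Φ i k ^ 2 ≤ ∑ k, Φ i k ^ 2 :=
            single_le_sum (f := fun k => Φ i k ^ 2) (fun _ _ => sq_nonneg _) (mem_univ k)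
        _ = P i i := by simp [congrFun₂ hΦ i i, Matrix.mul_apply, sq]
        _ ≤ R := hW i hi
    refine (Real.abs_le_sqrt ?_).trans (Nat.le_ceil _)
    calc (Φ i k / η) ^ 2 ≤ R / η ^ 2 := by rw [div_pow]; gcongr
      _ = R * (r + 1) / δ := by rw [← hη_sq]; field_simp
  obtain ⟨X, hXW, hcard, hX⟩ :=
    exists_subset_card_le_mul_card_and_abs_sub_lt_one W (fun i k => Φ i k / η) hbound
  refine ⟨X, hXW, hcard.trans ?_, fun i hi j hj => ?_⟩
  · rw [Fintype.card_fin, cellCount]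
    gcongr
    omega
  · have hdist : ∑ k, (Φ i k - Φ j k) ^ 2 ≤ δ := by
      have hcoord : ∀ k, (Φ i k - Φ j k) ^ 2 ≤ η ^ 2 := fun k => by
        have h := hX i hi j hj k
        rw [← sub_div, abs_div, abs_of_pos hη, div_lt_one hη] at h
        exact sq_le_sq' (abs_le.1 h.le).1 (abs_le.1 h.le).2
      calc ∑ k, (Φ i k - Φ j k) ^ 2 ≤ ∑ _k : Fin P.rank, η ^ 2 := sum_le_sum fun k _ => hcoord k
        _ = P.rank * η ^ 2 := by simp
        _ ≤ (r + 1) * η ^ 2 := by gcongr; exact (Nat.cast_le.2 hr).trans (by linarith)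
        _ = δ := hη_sq
    have hpolar := two_mul_mul_transpose_self_apply Φ i j
    rw [← hΦ] at hpolar
    linarith

variable [DecidableEq V]

lemma card_lt_apply_self_le {P A : Matrix V V ℝ} (hP : P.PosSemidef) {d : ℝ} (hd : 0 ≤ d)
    (hPA : P ≤ A + d • 1) (hA : ∀ i j, A i j ≤ 1) {r : ℕ} (hr : P.rank ≤ r) {R δ : ℝ}
    (hR : 0 < R) (hδ : 0 < δ) :
    (#{i | 1 + δ < P i i} : ℝ) ≤ P.trace / R + cellCount r R δ * (2 * d / δ) := by
  have hlarge : (#{i | R < P i i} : ℝ) ≤ P.trace / R := by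
    rw [le_div_iff₀' hR]
    exact mul_card_filter_lt_le_sum (fun i => hP.diag_nonneg) R
  have hmedium : (#{i | 1 + δ < P i i ∧ P i i ≤ R} : ℝ) ≤ cellCount r R δ * (2 * d / δ) := by
    obtain ⟨X, hXW, hcard, hX⟩ := exists_subset_card_le_cellCount_mul_card hP hr hδ
      (W := {i | 1 + δ < P i i ∧ P i i ≤ R}) fun i hi => (mem_filter.1 hi).2.2
    have hX_card := mul_card_le_of_le_add_smul_one (θ := δ / 2) hPA hA (fun i hi j hj => by
      linarith [hX i hi j hj, (mem_filter.1 (hXW hi)).2.1, (mem_filter.1 (hXW hj)).2.1]) hd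
    calc _ ≤ (cellCount r R δ : ℝ) * #X := by exact_mod_cast hcard
      _ ≤ _ := by
        gcongr
        rw [le_div_iff₀ hδ]
        linarith
  have hunion : ({i | 1 + δ < P i i} : Finset V) ⊆
      ({i | R < P i i} : Finset V) ∪ ({i | 1 + δ < P i i ∧ P i i ≤ R} : Finset V) :=
    fun i hi => by
      have hi' := (mem_filter.1 hi).2
      rcases lt_or_ge R (P i i) with h | h <;> simp [h, hi']
  calc _ ≤ (#{i | R < P i i} : ℝ) + #{i | 1 + δ < P i i ∧ P i i ≤ R} := by
        exact_mod_cast (card_le_card hunion).trans (card_union_le _ _)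
    _ ≤ _ := add_le_add hlarge hmedium

end Diagonal

section Clustering

variable {V : Type*}

/-- Exactly two of the three pairs of `u, v, w` are related: a failure of transitivity. -/
def BrokenTriple (r : V → V → Prop) (u v w : V) : Prop :=
  (r u v ∧ r u w ∧ ¬ r v w) ∨ (r u v ∧ ¬ r u w ∧ r v w) ∨ (¬ r u v ∧ r u w ∧ r v w)

open scoped Classical in
/-- The ordered pairs in `R` on which the relation `r` and the labelling `g` disagree: the
pairs to be edited in order to turn `r` into the partition of `R` into the fibres of `g`. -/
noncomputable def disagreements (r : V → V → Prop) (g : V → V) (R : Finset V) : Finset (V × V) :=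
  {p ∈ R ×ˢ R | ¬ (r p.1 p.2 ↔ g p.1 = g p.2)}

variable {r : V → V → Prop}

lemma brokenTriple_cases [Std.Symm r] {u v w : V} (h : BrokenTriple r u v w) :
    (r u v ∧ r u w ∧ ¬ r v w) ∨ (r v u ∧ r v w ∧ ¬ r u w) ∨ (r w u ∧ r w v ∧ ¬ r u v) := by
  rcases h with h | ⟨huv, huw, hvw⟩ | ⟨huv, huw, hvw⟩
  · exact .inl h
  · exact .inr (.inl ⟨symm_of r huv, hvw, huw⟩)
  · exact .inr (.inr ⟨symm_of r huw, symm_of r hvw, huv⟩)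

open scoped Classical in
lemma card_disagreements_id_le (hr : ∀ u, r u u) {R : Finset V} {e : ℝ}
    (h : ∀ u ∈ R, #{v ∈ R | r u v} ≤ e) : #(disagreements r id R) ≤ e * #R := by
  have hrow : ∀ u ∈ R, (#{v ∈ R | ¬ (r u v ↔ u = v)} : ℝ) ≤ e := fun u hu => by
    refine (Nat.cast_le.2 (card_le_card ?_)).trans (h u hu)
    refine monotone_filter_right R fun v _ hv => ?_
    by_contra hruv
    exact hv ⟨fun huv => (hruv huv).elim, fun huv => huv ▸ hr u⟩
  calc (#(disagreements r id R) : ℝ) = ∑ u ∈ R, (#{v ∈ R | ¬ (r u v ↔ u = v)} : ℝ) := by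
        simp only [disagreements, card_filter, sum_product, Nat.cast_sum, id]
    _ ≤ #R • e := sum_le_card_nsmul _ _ _ hrow
    _ = e * #R := by rw [nsmul_eq_mul, mul_comm]

open scoped Classical in
lemma disagreements_pivot_subset {R : Finset V} {u : V} (hu : r u u) {g : V → V}
    (hg : ∀ v ∈ R, ¬ r u v → ¬ r u (g v)) :
    disagreements r (fun v => if r u v then u else g v) R ⊆
      {p ∈ R ×ˢ R | BrokenTriple r u p.1 p.2} ∪ disagreements r g {v ∈ R | ¬ r u v} := by
  have hne : ∀ v ∈ R, ¬ r u v → g v ≠ u := fun v hv hv' h => hg v hv hv' (h ▸ hu)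
  rintro ⟨v, w⟩ hp
  simp only [disagreements, mem_filter, mem_product, mem_union] at hp ⊢
  obtain ⟨⟨hv, hw⟩, hp⟩ := hp
  rw [BrokenTriple]
  by_cases huv : r u v <;> by_cases huw : r u w <;> simp_all [eq_comm]

/- Pivot on a vertex `u` with at least `e` relatives: making them one cluster costs at most the
broken triples at `u`, that is `κ / e` per clustered vertex. Once no pivot is left, singletons
cost at most `e` per vertex. -/
open scoped Classical in
lemma exists_card_disagreements_le (hr : ∀ u, r u u) {e κ : ℝ} (he : 0 < e) (hκ : 0 ≤ κ)
    (R : Finset V) (h : ∀ u ∈ R, #{p ∈ R ×ˢ R | BrokenTriple r u p.1 p.2} ≤ κ) :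
    ∃ g : V → V, (∀ v ∈ R, g v ∈ R) ∧ #(disagreements r g R) ≤ (e + κ / e) * #R := by
  induction R using Finset.strongInduction with
  | H R ih =>
    by_cases hpivot : ∃ u ∈ R, e ≤ #{v ∈ R | r u v}
    · obtain ⟨u, hu, hue⟩ := hpivot
      have hR' : ({v ∈ R | ¬ r u v} : Finset V) ⊂ R :=
        filter_ssubset.2 ⟨u, hu, not_not.2 (hr u)⟩
      obtain ⟨g, hg, hcost⟩ := ih _ hR' fun v hv => by
        refine le_trans ?_ (h v (hR'.1 hv))
        gcongr
      refine ⟨fun v => if r u v then u else g v, fun v hv => ?_, ?_⟩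
      · dsimp only
        split_ifs with huv
        · exact hu
        · exact hR'.1 (hg v (mem_filter.2 ⟨hv, huv⟩))
      · have hsplit : (#R : ℝ) = #{v ∈ R | r u v} + #{v ∈ R | ¬ r u v} := by
          exact_mod_cast (card_filter_add_card_filter_not (r u)).symm
        have hsub := disagreements_pivot_subset (hr u) fun v hv huv =>
          (mem_filter.1 (hg v (mem_filter.2 ⟨hv, huv⟩))).2
        have hκe : κ ≤ κ / e * #{v ∈ R | r u v} :=
          calc κ = κ / e * e := (div_mul_cancel₀ κ he.ne').symm
            _ ≤ _ := by gcongr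
        calc (#(disagreements r (fun v => if r u v then u else g v) R) : ℝ)
            ≤ #{p ∈ R ×ˢ R | BrokenTriple r u p.1 p.2} +
                #(disagreements r g {v ∈ R | ¬ r u v}) := by
              exact_mod_cast (card_le_card hsub).trans (card_union_le _ _)
          _ ≤ κ / e * #{v ∈ R | r u v} + (e + κ / e) * #{v ∈ R | ¬ r u v} :=
              add_le_add ((h u hu).trans hκe) hcost
          _ ≤ (e + κ / e) * #R := by rw [hsplit]; nlinarith
    · push Not at hpivot
      refine ⟨id, fun v hv => hv, ?_⟩
      refine (card_disagreements_id_le hr fun u hu => (hpivot u hu).le).trans ?_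
      gcongr
      exact le_add_of_nonneg_right (by positivity)

variable [Fintype V]

lemma card_disagreements_univ_le [DecidableEq V] (r : V → V → Prop) (g : V → V) (R : Finset V) :
    #(disagreements r g univ) ≤ #(disagreements r g R) + 2 * #Rᶜ * Fintype.card V := by
  have hsub : disagreements r g univ ⊆ disagreements r g R ∪ (Rᶜ ×ˢ univ ∪ univ ×ˢ Rᶜ) := by
    rintro ⟨v, w⟩ hp
    simp only [disagreements, mem_filter, mem_union, mem_product, mem_compl, mem_univ, and_true,
      true_and] at hp ⊢
    tauto
  calc #(disagreements r g univ) ≤ _ := (card_le_card hsub).trans (card_union_le _ _)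
    _ ≤ #(disagreements r g R) + (#(Rᶜ ×ˢ (univ : Finset V)) + #((univ : Finset V) ×ˢ Rᶜ)) := by
      gcongr
      exact card_union_le _ _
    _ = _ := by simp only [card_product, card_univ]; ring

open scoped Classical in
lemma card_brokenTriple_le {B : V → V → Prop} {u : V} {R : Finset V}
    (hB : ∀ v ∈ R, ∀ w ∈ R, BrokenTriple r u v w → B u v ∨ B u w ∨ B v w) :
    #{p ∈ R ×ˢ R | BrokenTriple r u p.1 p.2} ≤
      2 * #{v | B u v} * Fintype.card V + #{p : V × V | B p.1 p.2} := by
  have hsub : ({p ∈ R ×ˢ R | BrokenTriple r u p.1 p.2} : Finset (V × V)) ⊆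
      ((univ.filter (B u) ×ˢ univ) ∪ (univ ×ˢ univ.filter (B u))) ∪
        univ.filter fun p : V × V => B p.1 p.2 := by
    rintro ⟨v, w⟩ hp
    simp only [mem_filter, mem_product] at hp
    simp only [mem_union, mem_product, mem_filter, mem_univ, true_and, and_true, or_assoc]
    exact hB v hp.1.1 w hp.1.2 hp.2
  calc _ ≤ _ := (card_le_card hsub).trans (card_union_le _ _)
    _ ≤ #(univ.filter (B u) ×ˢ (univ : Finset V)) + #((univ : Finset V) ×ˢ univ.filter (B u)) +
        #{p : V × V | B p.1 p.2} := by
      gcongr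
      exact card_union_le _ _
    _ = _ := by simp only [card_product, card_univ]; ring

open scoped Classical in
lemma mul_card_filter_lt_card_filter_le (B : V → V → Prop) (t : ℝ) :
    t * #{u | t < (#{v | B u v} : ℝ)} ≤ #{p : V × V | B p.1 p.2} := by
  have hsum : ∑ u, (#{v | B u v} : ℝ) = #{p : V × V | B p.1 p.2} := by
    simp only [card_filter, Fintype.sum_prod_type, Nat.cast_sum]
  exact (mul_card_filter_lt_le_sum (fun _ => Nat.cast_nonneg _) t).trans_eq hsum

open scoped Classical in
lemma exists_card_disagreements_le_of_brokenTriple [DecidableEq V] (hr : ∀ u, r u u)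
    {W : Finset V} {B : V → V → Prop}
    (hB : ∀ u ∈ W, ∀ v ∈ W, ∀ w ∈ W, BrokenTriple r u v w → B u v ∨ B u w ∨ B v w) {a : ℝ}
    (ha : 0 < a)
    (hB_card : #{p : V × V | B p.1 p.2} ≤ a ^ 3 / (a + 2) * (Fintype.card V : ℝ) ^ 2) :
    ∃ R ⊆ W, #Rᶜ ≤ #Wᶜ + a * Fintype.card V ∧
      ∃ g : V → V, #(disagreements r g R) ≤ 2 * a * (Fintype.card V : ℝ) ^ 2 := by
  rcases isEmpty_or_nonempty V with hV | hV
  · exact ⟨W, subset_rfl, by simp, id, by simp [disagreements, eq_empty_of_isEmpty]⟩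
  set n : ℝ := (Fintype.card V : ℝ)
  have hn : 0 < n := by simpa [n] using Fintype.card_pos
  set t := a ^ 2 / (a + 2) * n
  let D : Finset V := {u | t < (#{v | B u v} : ℝ)}
  have hD : #D ≤ a * n := by
    refine le_of_mul_le_mul_left ?_ (by positivity : 0 < t)
    calc t * #D ≤ a ^ 3 / (a + 2) * n ^ 2 := (mul_card_filter_lt_card_filter_le B t).trans hB_card
      _ = t * (a * n) := by ring
  have hκ : ∀ u ∈ W \ D, #{p ∈ (W \ D) ×ˢ (W \ D) | BrokenTriple r u p.1 p.2} ≤ (a * n) ^ 2 := by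
    intro u hu
    have hut : (#{v | B u v} : ℝ) ≤ t := by simpa [D] using (mem_sdiff.1 hu).2
    calc (#{p ∈ (W \ D) ×ˢ (W \ D) | BrokenTriple r u p.1 p.2} : ℝ)
        ≤ 2 * #{v | B u v} * n + #{p : V × V | B p.1 p.2} := by
          simp only [n]
          exact_mod_cast card_brokenTriple_le fun v hv w hw =>
            hB u (sdiff_subset hu) v (sdiff_subset hv) w (sdiff_subset hw)
      _ ≤ 2 * t * n + a ^ 3 / (a + 2) * n ^ 2 := by gcongr
      _ = (a * n) ^ 2 := by simp only [t]; field_simp; ring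
  obtain ⟨g, -, hg⟩ := exists_card_disagreements_le hr (by positivity : 0 < a * n)
    (sq_nonneg _) (W \ D) hκ
  refine ⟨W \ D, sdiff_subset, ?_, g, hg.trans ?_⟩
  · have hcompl : (W \ D)ᶜ ⊆ Wᶜ ∪ D := fun v => by
      simp only [mem_compl, mem_sdiff, mem_union]
      tauto
    calc (#(W \ D)ᶜ : ℝ) ≤ #Wᶜ + #D := by
          exact_mod_cast (card_le_card hcompl).trans (card_union_le _ _)
      _ ≤ #Wᶜ + a * n := by gcongr
  · have hcard : (#(W \ D) : ℝ) ≤ n := Nat.cast_le.2 (card_le_univ _)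
    calc (a * n + (a * n) ^ 2 / (a * n)) * #(W \ D) ≤ (a * n + (a * n) ^ 2 / (a * n)) * n := by
          gcongr
      _ = 2 * a * n ^ 2 := by field_simp; ring

end Clustering

section Cherry

variable {V : Type*} {P : Matrix V V ℝ}

lemma four_mul_apply_add_apply_le [Finite V] (hP : P.PosSemidef) (c x y : V) :
    4 * (P c x + P c y) ≤ 4 * P c c + P x x + P y y + 2 * P x y := by
  classical
  cases nonempty_fintype V
  have hsymm := (posSemidef_iff_isSymm_and_dotProduct_mulVec.1 hP).1.apply
  have h := (posSemidef_iff_isSymm_and_dotProduct_mulVec.1 hP).2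
    (Pi.single x 1 + Pi.single y 1 - (2 : ℝ) • Pi.single c 1)
  simp only [Matrix.mulVec_add, Matrix.mulVec_sub, Matrix.mulVec_smul, Matrix.mulVec_single_one,
    add_dotProduct, sub_dotProduct, smul_dotProduct, dotProduct_add, dotProduct_sub,
    dotProduct_smul, single_one_dotProduct, Matrix.col_apply, smul_eq_mul] at h
  linarith [hsymm c x, hsymm c y, hsymm x y]

variable {G : SimpleGraph V}

lemma lt_sq_sub_of_adj_of_adj_of_not_adj [Finite V] (hP : P.PosSemidef) {c x y : V}
    (hc : P c c ≤ 1 + 1 / 100) (hx : P x x ≤ 1 + 1 / 100) (hy : P y y ≤ 1 + 1 / 100)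
    (hcx : G.Adj c x) (hcy : G.Adj c y) (hxy : ¬ G.Adj x y) :
    1 / 100 < (adjMat G - P) c x ^ 2 ∨ 1 / 100 < (adjMat G - P) c y ^ 2 ∨
      1 / 100 < (adjMat G - P) x y ^ 2 := by
  classical
  by_contra! h
  simp only [Matrix.sub_apply, adjMat_apply, hcx, hcy, hxy, if_true, if_false] at h
  obtain ⟨hcx', hcy', hxy'⟩ := h
  have hsq : ∀ {z : ℝ}, z ^ 2 ≤ 1 / 100 → |z| ≤ 1 / 10 := fun hz =>
    abs_le_of_sq_le_sq (hz.trans (by norm_num)) (by norm_num)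
  have := four_mul_apply_add_apply_le hP c x y
  linarith [abs_le.1 (hsq hcx'), abs_le.1 (hsq hcy'), abs_le.1 (hsq hxy')]

lemma lt_sq_sub_of_brokenTriple [Finite V] (hP : P.PosSemidef) {u v w : V}
    (hu : P u u ≤ 1 + 1 / 100) (hv : P v v ≤ 1 + 1 / 100) (hw : P w w ≤ 1 + 1 / 100)
    (h : BrokenTriple (Relation.ReflGen G.Adj) u v w) :
    1 / 100 < (adjMat G - P) u v ^ 2 ∨ 1 / 100 < (adjMat G - P) u w ^ 2 ∨
      1 / 100 < (adjMat G - P) v w ^ 2 := by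
  have hsymm : ∀ i j, (adjMat G - P) i j = (adjMat G - P) j i := fun i j =>
    ((adjMat_isHermitian G).sub hP.1).apply j i
  have : Std.Symm G.Adj := G.symm
  have hcherry : ∀ {c x y : V}, P c c ≤ 1 + 1 / 100 → P x x ≤ 1 + 1 / 100 →
      P y y ≤ 1 + 1 / 100 → Relation.ReflGen G.Adj c x → Relation.ReflGen G.Adj c y →
      ¬ Relation.ReflGen G.Adj x y → 1 / 100 < (adjMat G - P) c x ^ 2 ∨
        1 / 100 < (adjMat G - P) c y ^ 2 ∨ 1 / 100 < (adjMat G - P) x y ^ 2 := by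
    rintro c x y hc hx hy (_ | hcx) (_ | hcy) hxy
    · exact (hxy .refl).elim
    · exact (hxy (.single hcy)).elim
    · exact (hxy (.single hcx.symm)).elim
    · exact lt_sq_sub_of_adj_of_adj_of_not_adj hP hc hx hy hcx hcy fun h => hxy (.single h)
  rcases brokenTriple_cases h with ⟨h₁, h₂, h₃⟩ | ⟨h₁, h₂, h₃⟩ | ⟨h₁, h₂, h₃⟩
  · exact hcherry hu hv hw h₁ h₂ h₃
  · have := hcherry hv hu hw h₁ h₂ h₃
    rw [hsymm v u] at this
    tauto
  · have := hcherry hw hu hv h₁ h₂ h₃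
    rw [hsymm w u, hsymm w v] at this
    tauto

variable [Fintype V] [DecidableEq V]

lemma exists_card_disagreements_le_of_posSemidef (hP : P.PosSemidef) {W : Finset V}
    (hW : ∀ i ∈ W, P i i ≤ 1 + 1 / 100) {a : ℝ} (ha : 0 < a)
    (hsq : ∑ i, ∑ j, (adjMat G - P) i j ^ 2 ≤
      a ^ 3 / (a + 2) / 100 * (Fintype.card V : ℝ) ^ 2) :
    ∃ R ⊆ W, #Rᶜ ≤ #Wᶜ + a * Fintype.card V ∧ ∃ g : V → V,
      #(disagreements (Relation.ReflGen G.Adj) g R) ≤ 2 * a * (Fintype.card V : ℝ) ^ 2 := by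
  classical
  refine exists_card_disagreements_le_of_brokenTriple (fun _ => .refl)
    (B := fun i j => 1 / 100 < (adjMat G - P) i j ^ 2)
    (fun u hu v hv w hw => lt_sq_sub_of_brokenTriple hP (hW u hu) (hW v hv) (hW w hw)) ha ?_
  have hmarkov := mul_card_filter_lt_le_sum
    (fun p : V × V => sq_nonneg ((adjMat G - P) p.1 p.2)) (1 / 100)
  rw [Fintype.sum_prod_type] at hmarkov
  have hcard : (#{p : V × V | 1 / 100 < (adjMat G - P) p.1 p.2 ^ 2} : ℝ) ≤
      a ^ 3 / (a + 2) * (Fintype.card V : ℝ) ^ 2 := by linarith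
  convert hcard

end Cherry

section ClusterGraph

variable {V : Type*}

/-- The disjoint union of cliques whose vertex sets are the fibres of `g`. -/
def clusterGraph (g : V → V) : SimpleGraph V := (SimpleGraph.comap g ⊤)ᶜ

lemma clusterGraph_adj {g : V → V} {u v : V} : (clusterGraph g).Adj u v ↔ u ≠ v ∧ g u = g v := by
  simp [clusterGraph]

lemma isUnionOfCliques_clusterGraph (g : V → V) : IsUnionOfCliques (clusterGraph g) := by
  rintro u v ⟨p⟩ hne
  refine clusterGraph_adj.2 ⟨hne, ?_⟩
  clear hne
  induction p with
  | nil => rfl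
  | cons h _ ih => exact (clusterGraph_adj.1 h).2.trans ih

lemma ncard_symmDiff_edgeSet_clusterGraph_le [Fintype V] (G : SimpleGraph V) (g : V → V) :
    (symmDiff G.edgeSet (clusterGraph g).edgeSet).ncard ≤
      #(disagreements (Relation.ReflGen G.Adj) g univ) := by
  have hsub : symmDiff G.edgeSet (clusterGraph g).edgeSet ⊆
      (fun p : V × V => s(p.1, p.2)) '' disagreements (Relation.ReflGen G.Adj) g univ := by
    rintro ⟨x, y⟩ he
    refine ⟨(x, y), ?_, rfl⟩
    simp only [disagreements, coe_filter, mem_product, mem_univ, true_and, Set.mem_ofPred_eq,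
      Relation.reflGen_iff]
    rcases Set.mem_symmDiff.1 he with ⟨hG, hg⟩ | ⟨hg, hG⟩ <;>
      simp only [SimpleGraph.mem_edgeSet, clusterGraph_adj] at hG hg
    · have := hG.ne
      tauto
    · have := hg.1.symm
      tauto
  calc _ ≤ _ := Set.ncard_le_ncard hsub (Set.toFinite _)
    _ ≤ _ := Set.ncard_image_le (Set.toFinite _)
    _ = _ := Set.ncard_coe_finset _

lemma not_farFromCliqueUnions_of_card_disagreements_le {n : ℕ} {G : SimpleGraph (Fin n)}
    {g : Fin n → Fin n} {ε : ℝ}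
    (h : #(disagreements (Relation.ReflGen G.Adj) g univ) ≤ ε * (n : ℝ) ^ 2) :
    ¬ FarFromCliqueUnions ε G := fun hfar =>
  hfar _ (isUnionOfCliques_clusterGraph g) ⟨clusterGraph g, ⟨.refl⟩,
    (Nat.cast_le.2 (ncard_symmDiff_edgeSet_clusterGraph_le G g)).trans h⟩

lemma disagreements_induce (G : SimpleGraph V) {R U : Finset V} (h : R ⊆ U)
    (g : V → V) :
    disagreements (Relation.ReflGen (G.induce (U : Set V)).spanningCoe.Adj) g R =
      disagreements (Relation.ReflGen G.Adj) g R := by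
  ext p
  simp only [disagreements, mem_filter, mem_product]
  refine and_congr_right fun ⟨h₁, h₂⟩ => ?_
  simp [Relation.reflGen_iff, h h₁, h h₂]

end ClusterGraph

section Conclusion

lemma exists_card_disagreements_univ_le {V : Type*} [Fintype V] [DecidableEq V]
    {G : SimpleGraph V} {U : Finset V} {a d : ℝ} {J : ℕ} (ha : 0 < a) (hd1 : 1 ≤ d)
    (hdn : d ^ 6 ≤ Fintype.card V)
    (hd : 0 ≤ adjMat (G.induce (U : Set V)).spanningCoe + d • (1 : Matrix V V ℝ))
    (hU : #Uᶜ ≤ a * Fintype.card V) (hJ : J ≠ 0)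
    (hJa : 32 / 2 ^ J ≤ a ^ 3 / (a + 2) / 200)
    (hda : d ^ 2 ≤ a ^ 3 / (a + 2) / 200 * Fintype.card V)
    (hcells : cellCount (8 ^ J) (4 * 2 ^ J / a) (1 / 100) * (200 * d) ≤ a / 2 * Fintype.card V) :
    ∃ g : V → V, #(disagreements (Relation.ReflGen G.Adj) g univ) ≤
      8 * a * (Fintype.card V : ℝ) ^ 2 := by
  set n : ℝ := (Fintype.card V : ℝ)
  obtain ⟨P, hP, hPA, hrank, htrace, hsq⟩ := exists_low_rank_posSemidef_approx hd1 hdn hd hJ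
  have hdiag : (#{i | 1 + 1 / 100 < P i i} : ℝ) ≤ a * n :=
    calc _ ≤ P.trace / (4 * 2 ^ J / a) +
          cellCount (8 ^ J) (4 * 2 ^ J / a) (1 / 100) * (2 * d / (1 / 100)) :=
          card_lt_apply_self_le hP (zero_le_one.trans hd1) hPA (adjMat_le_one _) hrank
            (by positivity) (by norm_num)
      _ ≤ 2 * n * 2 ^ J / (4 * 2 ^ J / a) + a / 2 * n :=
        add_le_add (by gcongr) (le_of_eq_of_le (by ring) hcells)
      _ = a * n := by field_simp; ring
  have hW_compl : (#({i ∈ U | P i i ≤ 1 + 1 / 100} : Finset V)ᶜ : ℝ) ≤ 2 * a * n := by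
    have hsub : ({i ∈ U | P i i ≤ 1 + 1 / 100} : Finset V)ᶜ ⊆
        Uᶜ ∪ univ.filter fun i => 1 + 1 / 100 < P i i := fun i => by
      simp only [mem_compl, mem_filter, mem_union, mem_univ, true_and, ← not_le]
      tauto
    calc _ ≤ (#Uᶜ + #{i | 1 + 1 / 100 < P i i} : ℝ) := by
          exact_mod_cast (card_le_card hsub).trans (card_union_le _ _)
      _ ≤ _ := by linarith
  obtain ⟨R, hRW, hR, g, hg⟩ := exists_card_disagreements_le_of_posSemidef (a := a) hP
    (W := {i ∈ U | P i i ≤ 1 + 1 / 100}) (fun i hi => (mem_filter.1 hi).2) ha <|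
    calc _ ≤ 32 * n ^ 2 / 2 ^ J + n * d ^ 2 := hsq
      _ = 32 / 2 ^ J * n ^ 2 + n * d ^ 2 := by ring
      _ ≤ a ^ 3 / (a + 2) / 200 * n ^ 2 + n * (a ^ 3 / (a + 2) / 200 * n) := by gcongr
      _ = a ^ 3 / (a + 2) / 100 * n ^ 2 := by ring
  rw [disagreements_induce G (hRW.trans (filter_subset _ _))] at hg
  refine ⟨g, ?_⟩
  calc (#(disagreements (Relation.ReflGen G.Adj) g univ) : ℝ)
      ≤ #(disagreements (Relation.ReflGen G.Adj) g R) + 2 * #Rᶜ * n := by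
        simp only [n]
        exact_mod_cast card_disagreements_univ_le _ g R
    _ ≤ 2 * a * n ^ 2 + 2 * (2 * a * n + a * n) * n := by gcongr; linarith
    _ = 8 * a * n ^ 2 := by ring

lemma eventually_mul_rpow_le_mul_rpow {α β : ℝ} (h : α < β) (C : ℝ) {c : ℝ} (hc : 0 < c) :
    ∀ᶠ n : ℕ in Filter.atTop, C * (n : ℝ) ^ α ≤ c * (n : ℝ) ^ β := by
  have hlim : Filter.Tendsto (fun n : ℕ => C * (n : ℝ) ^ (-(β - α))) Filter.atTop (nhds 0) := by
    simpa using
      ((tendsto_rpow_neg_atTop (sub_pos.2 h)).comp tendsto_natCast_atTop_atTop).const_mul C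
  filter_upwards [hlim.eventually_le_const hc, Filter.eventually_gt_atTop 0] with n hCn hn
  have hn' : (0 : ℝ) < n := Nat.cast_pos.2 hn
  calc C * (n : ℝ) ^ α = C * (n : ℝ) ^ (-(β - α)) * (n : ℝ) ^ β := by
        rw [mul_assoc, ← Real.rpow_add hn']
        congr 2
        ring
    _ ≤ c * (n : ℝ) ^ β := by gcongr

lemma exists_ne_zero_div_two_pow_le (C : ℝ) {η : ℝ} (hη : 0 < η) :
    ∃ J : ℕ, J ≠ 0 ∧ C / 2 ^ J ≤ η := by
  obtain ⟨k, hk⟩ := pow_unbounded_of_one_lt (C / η) one_lt_two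
  refine ⟨k + 1, k.succ_ne_zero, (div_le_comm₀ (by positivity) hη).2 (hk.le.trans ?_)⟩
  exact pow_le_pow_right₀ one_le_two k.le_succ

theorem stmt13_general (ε : ℝ) (hε : 0 < ε) :
    ∀ᶠ n : ℕ in Filter.atTop, ∀ G : SimpleGraph (Fin n), FarFromCliqueUnions ε G →
      ε / 16 * (n : ℝ) ^ ((1 : ℝ) + 1 / 6) ≤ spStar G := by
  set a := ε / 8 with ha_def
  have ha : 0 < a := by positivity
  obtain ⟨J, hJ, hJa⟩ : ∃ J : ℕ, J ≠ 0 ∧ 32 / 2 ^ J ≤ a ^ 3 / (a + 2) / 200 :=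
    exists_ne_zero_div_two_pow_le 32 (by positivity)
  filter_upwards [Filter.eventually_ge_atTop 1,
    eventually_mul_rpow_le_mul_rpow (by norm_num : (1 / 3 : ℝ) < 1) 1
      (by positivity : 0 < a ^ 3 / (a + 2) / 200),
    eventually_mul_rpow_le_mul_rpow (by norm_num : (1 / 6 : ℝ) < 1)
      (cellCount (8 ^ J) (4 * 2 ^ J / a) (1 / 100) * 200) (half_pos ha)]
    with n hn hda hcells G hfar
  have hn0 : (0 : ℝ) ≤ n := n.cast_nonneg
  rw [Real.rpow_one] at hda hcells
  set d : ℝ := (n : ℝ) ^ (1 / 6 : ℝ)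
  have hd1 : 1 ≤ d := Real.one_le_rpow (by exact_mod_cast hn) (by norm_num)
  have hd_pow : ∀ k : ℕ, d ^ k = (n : ℝ) ^ (1 / 6 * k : ℝ) := fun k =>
    (Real.rpow_mul_natCast hn0 _ k).symm
  by_contra! hsp
  obtain ⟨U, hU, hUd⟩ :=
    exists_finset_card_compl_le_and_adjMat_induce_posSemidef G (zero_le_one.trans hd1)
  have hU_card : #Uᶜ ≤ a * n := by
    refine le_of_mul_le_mul_left ?_ (one_pos.trans_le hd1)
    rw [Real.rpow_add (by exact_mod_cast hn), Real.rpow_one] at hsp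
    calc d * #Uᶜ ≤ 2 * (ε / 16 * (n * d)) := hU.trans (by gcongr)
      _ = d * (a * n) := by rw [ha_def]; ring
  have hdn : d ^ 6 ≤ n := by rw [hd_pow]; norm_num
  have hda' : d ^ 2 ≤ a ^ 3 / (a + 2) / 200 * n := by rw [hd_pow]; norm_num at hda ⊢; exact hda
  obtain ⟨g, hg⟩ := exists_card_disagreements_univ_le (J := J) ha hd1 (by simpa using hdn) hUd
    (by simpa using hU_card) hJ hJa (by simpa using hda') (by simpa [mul_assoc] using hcells)
  refine not_farFromCliqueUnions_of_card_disagreements_le (hg.trans_eq ?_) hfar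
  rw [Fintype.card_fin, ha_def]
  ring

end Conclusion

-- If `G` is `ε`-far from every disjoint union of cliques, then
-- `sp*(G) ≥ (1/2) n ^ (1 + 1/99)`.
theorem stmt13 (ε : ℝ) (hε : 0 < ε) :
    ∃ n₀ : ℕ, ∀ (n : ℕ), n₀ ≤ n →
      ∀ G : SimpleGraph (Fin n),
        FarFromCliqueUnions ε G →
        (1 / 2) * (n : ℝ) ^ ((1 : ℝ) + 1 / 99) ≤ spStar G := by
  exact Filter.eventually_atTop.1 (((stmt13_general ε hε).and (eventually_mul_rpow_le_mul_rpow
    (by norm_num : (1 : ℝ) + 1 / 99 < 1 + 1 / 6) (1 / 2) (by positivity : 0 < ε / 16))).mono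
    fun n h G hG => h.2.trans (h.1 G hG))
end

section
/- Let γ = 1/200. There exists n₀ such that the following holds: if G₀ is a graph on n₀' ≥ n₀ vertices with edge density p(G₀) ≥ (n₀')^(−γ) and sp*(G₀) ≤ (1/2)(n₀')^(1+γ), then at least one of the following holds: (1) G₀ contains an induced subgraph G₁ on at least n₀'/8 vertices with p(G₁) ≥ 2 p(G₀); (2) G₀ contains an induced subgraph G₁ on at least p(G₀) · n₀' vertices with p(G₁) ≥ 10^(−10) √(p(G₀)). -/
-- The edge density `p(G) = 2 m / n ^ 2`.
noncomputable def density {V : Type*} [Fintype V] (G : SimpleGraph V) : ℝ :=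
  2 * (G.edgeSet.ncard : ℝ) / (Fintype.card V : ℝ) ^ 2

/-
Write `A` for the adjacency matrix and `A + N = P` with `N` the negative part of `A`. Testing `sp*`
against the projection onto the negative eigenspaces, and against `N` itself, bounds the trace and
the Frobenius norm of `N`. Since `A` has entries in `{0, 1}`, so that `A ⊙ A = A`, the positive
semidefinite `P` nearly satisfies `P ⊙ P = P`.

Let `S r` be the sum of the `r` largest eigenvalues of `P`. The Hadamard square of a rank `r`
compression of `P` has rank at most `r ^ 2` and lies below `P ⊙ P ≈ P`, whence
`S r ^ 2 ≤ n * (S (r ^ 2) + error)`; iterating gives `S r ≤ 2 * n * r ^ (1 / 4)`. Hence the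
eigenvalues decay fast enough that a constant fraction of `‖P‖ ^ 2 ≈ p * n ^ 2` sits on
`O(1 / p ^ 2)` of them, and `tr P ^ 3`, so also `tr A ^ 3`, is at least a constant times
`p ^ (5 / 2) * n ^ 3`.

If alternative (1) fails, then removing the vertices of degree more than `64 * p * n`, and those
where the diagonal of `N` is large, keeps a constant fraction of the edges. The bound on `tr A ^ 3`
then yields a vertex with at most `64 * p * n` neighbours whose neighbourhood spans a constant times
`p ^ (5 / 2) * n ^ 2` edges.
-/

open scoped Matrix Matrix.Norms.Frobenius Finset

namespace DensityIncrement

section Frobenius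

variable {m n : Type*} [Fintype m] [Fintype n]

lemma frobenius_norm_sq (M : Matrix m n ℝ) : ‖M‖ ^ 2 = ∑ i, ∑ j, M i j ^ 2 := by
  have h : 0 ≤ ∑ i, ∑ j, M i j ^ 2 := by positivity
  rw [Matrix.frobenius_norm_def, ← Real.sqrt_eq_rpow]
  simp only [Real.rpow_two, Real.norm_eq_abs, sq_abs, Real.sq_sqrt h]

lemma frobenius_norm_sq_eq_trace (M : Matrix m n ℝ) : ‖M‖ ^ 2 = (Mᴴ * M).trace := by
  rw [frobenius_norm_sq, Finset.sum_comm]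
  simp [Matrix.trace, Matrix.mul_apply, sq]

lemma frobenius_norm_le_of_abs_le {M N : Matrix m n ℝ} {c : ℝ} (hc : 0 ≤ c)
    (h : ∀ i j, |M i j| ≤ c * |N i j|) : ‖M‖ ≤ c * ‖N‖ := by
  refine le_of_sq_le_sq ?_ (by positivity)
  simp only [mul_pow, frobenius_norm_sq, Finset.mul_sum]
  refine Finset.sum_le_sum fun i _ => Finset.sum_le_sum fun j _ => ?_
  calc M i j ^ 2 = |M i j| ^ 2 := (sq_abs _).symm
    _ ≤ (c * |N i j|) ^ 2 := by gcongr; exact h i j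
    _ = c ^ 2 * N i j ^ 2 := by rw [mul_pow, sq_abs]

lemma frobenius_norm_submatrix_le {l : Type*} [Fintype l] (M : Matrix n n ℝ) {f : l → n}
    (hf : f.Injective) : ‖M.submatrix f f‖ ≤ ‖M‖ := by
  refine le_of_sq_le_sq ?_ (norm_nonneg _)
  simp only [frobenius_norm_sq, Matrix.submatrix_apply, ← Fintype.sum_prod_type']
  calc ∑ x : l × l, M (f x.1) (f x.2) ^ 2
      = ∑ x ∈ Finset.univ.map ⟨Prod.map f f, hf.prodMap hf⟩, M x.1 x.2 ^ 2 := by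
        rw [Finset.sum_map]; rfl
    _ ≤ ∑ x : n × n, M x.1 x.2 ^ 2 :=
        Finset.sum_le_univ_sum_of_nonneg fun _ => sq_nonneg _

lemma abs_trace_mul_le (X : Matrix m n ℝ) (Y : Matrix n m ℝ) :
    |(X * Y).trace| ≤ ‖X‖ * ‖Y‖ := by
  refine abs_le_of_sq_le_sq ?_ (by positivity)
  rw [mul_pow, ← Matrix.frobenius_norm_transpose Y, frobenius_norm_sq, frobenius_norm_sq,
    ← Fintype.sum_prod_type', ← Fintype.sum_prod_type']
  simp only [Matrix.trace, Matrix.diag_apply, Matrix.mul_apply, ← Fintype.sum_prod_type']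
  exact Finset.sum_mul_sq_le_sq_mul_sq _ _ _

lemma trace_mul_mul_le {l : Type*} [Fintype l] {X : Matrix m n ℝ} {Y : Matrix n l ℝ} {x y : ℝ}
    (hX : ‖X‖ ≤ x) (hY : ‖Y‖ ≤ y) (Z : Matrix l m ℝ) : (X * Y * Z).trace ≤ x * y * ‖Z‖ := by
  have hx : 0 ≤ x := (norm_nonneg X).trans hX
  calc (X * Y * Z).trace ≤ ‖X * Y‖ * ‖Z‖ := (le_abs_self _).trans (abs_trace_mul_le _ _)
    _ ≤ ‖X‖ * ‖Y‖ * ‖Z‖ := by gcongr; exact Matrix.frobenius_norm_mul X Y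
    _ ≤ x * y * ‖Z‖ := by gcongr

end Frobenius

section Isometry

variable {m κ : Type*} [Fintype m] [Fintype κ] [DecidableEq κ]
  {W : Matrix m κ ℝ}

lemma frobenius_norm_sq_of_isometry (hW : Wᴴ * W = 1) : ‖W‖ ^ 2 = Fintype.card κ := by
  rw [frobenius_norm_sq_eq_trace, hW, Matrix.trace_one]

lemma abs_trace_conj_isometry_le (hW : Wᴴ * W = 1) (M : Matrix m m ℝ) :
    |(Wᴴ * M * W).trace| ≤ Fintype.card κ * ‖M‖ := by
  rw [Matrix.trace_mul_cycle]
  calc |(W * Wᴴ * M).trace| ≤ ‖W * Wᴴ‖ * ‖M‖ := abs_trace_mul_le _ _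
    _ ≤ ‖W‖ * ‖Wᴴ‖ * ‖M‖ := by gcongr; exact Matrix.frobenius_norm_mul _ _
    _ = Fintype.card κ * ‖M‖ := by
      rw [Matrix.frobenius_norm_conjTranspose, ← sq, frobenius_norm_sq_of_isometry hW]

lemma one_sub_mul_self_of_isometry [DecidableEq m] (hW : Wᴴ * W = 1) :
    (1 - W * Wᴴ)ᴴ * (1 - W * Wᴴ) = 1 - W * Wᴴ := by
  have h : W * Wᴴ * (W * Wᴴ) = W * Wᴴ := by
    rw [Matrix.mul_assoc, ← Matrix.mul_assoc Wᴴ, hW, Matrix.one_mul]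
  rw [Matrix.conjTranspose_sub, Matrix.conjTranspose_one, Matrix.conjTranspose_mul,
    Matrix.conjTranspose_conjTranspose, sub_mul, mul_sub, mul_sub, h]
  simp

lemma posSemidef_one_sub_of_isometry [DecidableEq m] (hW : Wᴴ * W = 1) :
    (1 - W * Wᴴ).PosSemidef := by
  rw [← one_sub_mul_self_of_isometry hW]
  exact Matrix.posSemidef_conjTranspose_mul_self _

lemma trace_conj_isometry_le (hW : Wᴴ * W = 1) {P : Matrix m m ℝ} (hP : P.PosSemidef) :
    (Wᴴ * P * W).trace ≤ P.trace := by
  classical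
  let C := 1 - W * Wᴴ
  have h : (C * P * Cᴴ).trace = P.trace - (Wᴴ * P * W).trace := by
    rw [Matrix.trace_mul_cycle, one_sub_mul_self_of_isometry hW, Matrix.trace_mul_cycle Wᴴ,
      sub_mul, one_mul, Matrix.trace_sub]
  linarith [(hP.mul_mul_conjTranspose_same C).trace_nonneg]

end Isometry

section Spectral

variable {n : Type*} [Fintype n] [DecidableEq n] {A : Matrix n n ℝ}

/-- The matrix whose columns are the orthonormal eigenvectors of `A` with index in `J`. -/
noncomputable def eigenvectorCols (hA : A.IsHermitian) (J : Finset n) : Matrix n J ℝ :=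
  (hA.eigenvectorUnitary : Matrix n n ℝ).submatrix id (↑)

lemma eigenvectorCols_isometry (hA : A.IsHermitian) (J : Finset n) :
    (eigenvectorCols hA J)ᴴ * eigenvectorCols hA J = 1 := by
  let U : Matrix n n ℝ := hA.eigenvectorUnitary
  have hU : Uᴴ * U = 1 := Unitary.coe_star_mul_self hA.eigenvectorUnitary
  calc (eigenvectorCols hA J)ᴴ * eigenvectorCols hA J = (Uᴴ * U).submatrix (↑) (↑) := rfl
    _ = 1 := by rw [hU, Matrix.submatrix_one _ Subtype.val_injective]

lemma mul_eigenvectorCols (hA : A.IsHermitian) (J : Finset n) :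
    A * eigenvectorCols hA J =
      eigenvectorCols hA J * Matrix.diagonal fun j : J => hA.eigenvalues j := by
  ext i j
  rw [Matrix.mul_diagonal, mul_comm]
  exact congrFun (hA.mulVec_eigenvectorBasis j) i

lemma trace_conj_eigenvectorCols (hA : A.IsHermitian) (J : Finset n) :
    ((eigenvectorCols hA J)ᴴ * A * eigenvectorCols hA J).trace = ∑ j ∈ J, hA.eigenvalues j := by
  rw [Matrix.mul_assoc, mul_eigenvectorCols, ← Matrix.mul_assoc, eigenvectorCols_isometry,
    Matrix.one_mul, Matrix.trace_diagonal, Finset.sum_coe_sort J]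

lemma eigenvectorCols_mul_conjTranspose_add_compl (hA : A.IsHermitian) (J : Finset n) :
    eigenvectorCols hA J * (eigenvectorCols hA J)ᴴ +
      eigenvectorCols hA Jᶜ * (eigenvectorCols hA Jᶜ)ᴴ = 1 := by
  let U : Matrix n n ℝ := hA.eigenvectorUnitary
  have hU : U * Uᴴ = 1 := Unitary.coe_mul_star_self hA.eigenvectorUnitary
  have happly (I : Finset n) (i j : n) :
      (eigenvectorCols hA I * (eigenvectorCols hA I)ᴴ) i j = ∑ k ∈ I, U i k * U j k :=
    Finset.sum_coe_sort I fun k => U i k * U j k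
  ext i j
  rw [Matrix.add_apply, happly, happly, Finset.sum_add_sum_compl, ← hU]
  rfl

lemma exists_isometry_card_eq_rank (hA : A.IsHermitian) :
    ∃ (J : Finset n) (W : Matrix n J ℝ), #J = A.rank ∧ Wᴴ * W = 1 ∧
      (Wᴴ * A * W).trace = A.trace := by
  refine ⟨Finset.univ.filter (hA.eigenvalues · ≠ 0), eigenvectorCols hA _, ?_,
    eigenvectorCols_isometry hA _, ?_⟩
  · rw [hA.rank_eq_card_non_zero_eigs, Fintype.card_subtype]
  · rw [trace_conj_eigenvectorCols, hA.trace_eq_sum_eigenvalues, Finset.sum_filter_ne_zero]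
    rfl

end Spectral

section NegativePart

variable {n : Type*} [Fintype n] {A : Matrix n n ℝ}

/- Take for `Q` the orthogonal projection onto the span of the eigenvectors with negative
eigenvalue. -/
lemma exists_negPart (hA : A.IsHermitian) :
    ∃ N Q : Matrix n n ℝ, N.PosSemidef ∧ (A + N).PosSemidef ∧ (A + N) * N = 0 ∧
      Q.PosSemidef ∧ (∀ i, Q i i ≤ 1) ∧ A * Q = -N := by
  classical
  let J : Finset n := {j | hA.eigenvalues j < 0}
  let W (I : Finset n) : Matrix n I ℝ := eigenvectorCols hA I
  let D (I : Finset n) : Matrix I I ℝ := .diagonal fun j => hA.eigenvalues j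
  have hW : (W J)ᴴ * W J = 1 := eigenvectorCols_isometry hA J
  have hAW (I : Finset n) : A * (W I * (W I)ᴴ) = W I * D I * (W I)ᴴ := by
    rw [← mul_eigenvectorCols hA I, Matrix.mul_assoc]
  have hcompl : W Jᶜ * (W Jᶜ)ᴴ = 1 - W J * (W J)ᴴ :=
    eq_sub_of_add_eq' (eigenvectorCols_mul_conjTranspose_add_compl hA J)
  have hadd : A + -(A * (W J * (W J)ᴴ)) = A * (W Jᶜ * (W Jᶜ)ᴴ) := by
    rw [hcompl, mul_sub, mul_one, sub_eq_add_neg]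
  refine ⟨-(A * (W J * (W J)ᴴ)), W J * (W J)ᴴ, ?_, ?_, ?_,
    Matrix.posSemidef_self_mul_conjTranspose _, fun i => ?_, (neg_neg _).symm⟩
  · have hD : (-D J).PosSemidef := by
      rw [Matrix.diagonal_neg]
      exact .diagonal fun j => neg_nonneg.2 (Finset.mem_filter.1 j.2).2.le
    rw [hAW, ← Matrix.neg_mul, ← Matrix.mul_neg]
    exact hD.mul_mul_conjTranspose_same _
  · have hD : (D Jᶜ).PosSemidef := .diagonal fun j => by simpa [J] using j.2
    rw [hadd, hAW]
    exact hD.mul_mul_conjTranspose_same _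
  · have horth : W Jᶜ * (W Jᶜ)ᴴ * W J = 0 := by
      rw [hcompl, Matrix.sub_mul, Matrix.mul_assoc, hW, Matrix.one_mul, Matrix.mul_one, sub_self]
    rw [hadd, mul_neg, hAW J, Matrix.mul_assoc A, Matrix.mul_assoc (W J),
      ← Matrix.mul_assoc _ (W J), horth, Matrix.zero_mul, Matrix.mul_zero, neg_zero]
  · have h := (posSemidef_one_sub_of_isometry hW).diag_nonneg (i := i)
    simpa using h

lemma sum_sq_negPart_le {N : Matrix n n ℝ} (hA : A.IsHermitian) (hN : N.IsHermitian)
    (h : (A + N) * N = 0) (i : n) : ∑ j, N i j ^ 2 ≤ ∑ j, A i j ^ 2 := by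
  have hdiag {M : Matrix n n ℝ} (hM : M.IsHermitian) : (M * M) i i = ∑ j, M i j ^ 2 := by
    simp only [Matrix.mul_apply, sq]
    exact Finset.sum_congr rfl fun j _ => by rw [← hM.apply j i]; rfl
  have h' : N * (A + N) = 0 := by
    have := congrArg Matrix.conjTranspose h
    rwa [Matrix.conjTranspose_mul, (hA.add hN).eq, hN.eq, Matrix.conjTranspose_zero] at this
  have hsq : (A + N) * (A + N) = A * A - N * N := by
    calc (A + N) * (A + N) = A * A + N * (A + N) - N * N + (A + N) * N := by noncomm_ring
      _ = A * A - N * N := by rw [h, h', add_zero, add_zero]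
  have := congrFun (congrFun hsq i) i
  rw [Matrix.sub_apply, hdiag hA, hdiag hN, hdiag (hA.add hN)] at this
  linarith [Finset.sum_nonneg fun j (_ : j ∈ Finset.univ) => sq_nonneg ((A + N) i j)]

end NegativePart

section PosSemidef

variable {n : Type*} {P : Matrix n n ℝ}

open scoped MatrixOrder in
lemma exists_hermitian_sqrt [Fintype n] (hP : P.PosSemidef) :
    ∃ B : Matrix n n ℝ, B.IsHermitian ∧ B * B = P := by
  classical
  exact ⟨CFC.sqrt P, (Matrix.nonneg_iff_posSemidef.1 (CFC.sqrt_nonneg P)).isHermitian,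
    CFC.sqrt_mul_sqrt_self P hP.nonneg⟩

lemma abs_apply_le_of_diag_le [Finite n] (hP : P.PosSemidef) {d : ℝ} (hd : ∀ i, P i i ≤ d)
    (i j : n) : |P i j| ≤ d := by
  classical
  cases nonempty_fintype n
  have hsymm : P j i = P i j := hP.isHermitian.apply i j
  have h (c : ℝ) : 0 ≤ P i i + 2 * c * P i j + c ^ 2 * P j j := by
    have := hP.dotProduct_mulVec_nonneg (Pi.single i 1 + Pi.single j c)
    simp only [Matrix.mulVec_add, Matrix.mulVec_single, MulOpposite.op_one, one_smul,
      op_smul_eq_smul, dotProduct_add, add_dotProduct, single_dotProduct, Matrix.col_apply, one_mul,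
      star_trivial, hsymm, dotProduct_smul, smul_eq_mul] at this
    linarith
  rw [abs_le]
  constructor <;> linarith [hd i, hd j, h 1, h (-1)]

end PosSemidef

section Hadamard

variable {n : Type*}

lemma posSemidef_hadamard_self_sub {X Y : Matrix n n ℝ} (hX : X.PosSemidef)
    (hXY : (Y - X).PosSemidef) : (Y ⊙ Y - X ⊙ X).PosSemidef := by
  have h : Y ⊙ Y - X ⊙ X = (Y - X) ⊙ (Y - X) + (2 : ℝ) • X ⊙ (Y - X) := by
    ext i j
    simp only [Matrix.sub_apply, Matrix.add_apply, Matrix.smul_apply, Matrix.hadamard_apply,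
      smul_eq_mul]
    ring
  rw [h]
  exact (hXY.hadamard hXY).add ((hX.hadamard hXY).smul zero_le_two)

lemma sq_trace_le [Fintype n] (X : Matrix n n ℝ) :
    X.trace ^ 2 ≤ Fintype.card n * (X ⊙ X).trace := by
  simpa [Matrix.trace, sq] using sq_sum_le_card_mul_sum_sq (s := Finset.univ) (f := fun i => X i i)

lemma rank_hadamard_mul_mul_le {m l κ ι : Type*} [Fintype l] [Fintype κ] [Fintype ι]
    (B : Matrix m κ ℝ) (C : Matrix κ l ℝ)
    (D : Matrix m ι ℝ) (E : Matrix ι l ℝ) :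
    ((B * C) ⊙ (D * E)).rank ≤ Fintype.card κ * Fintype.card ι := by
  let F : Matrix m (κ × ι) ℝ := .of fun i a => B i a.1 * D i a.2
  let G : Matrix (κ × ι) l ℝ := .of fun a j => C a.1 j * E a.2 j
  have h : (B * C) ⊙ (D * E) = F * G := by
    ext i j
    simp only [Matrix.hadamard_apply, Matrix.mul_apply, Finset.sum_mul_sum, F, G, Matrix.of_apply,
      Fintype.sum_prod_type]
    congr! 2
    ring
  rw [h, ← Fintype.card_prod]
  exact (Matrix.rank_mul_le_left F G).trans (Matrix.rank_le_card_width F)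

end Hadamard

section HadamardStep

variable {n κ : Type*} [Fintype n] [DecidableEq n] [Fintype κ] [DecidableEq κ]

lemma exists_isometry_sq_trace_le {P : Matrix n n ℝ} (hP : P.PosSemidef) {W : Matrix n κ ℝ}
    (hW : Wᴴ * W = 1) :
    ∃ (J : Finset n) (W' : Matrix n J ℝ), #J ≤ Fintype.card κ ^ 2 ∧ W'ᴴ * W' = 1 ∧
      (Wᴴ * P * W).trace ^ 2 ≤
        Fintype.card n * ((W'ᴴ * P * W').trace + Fintype.card κ ^ 2 * ‖P ⊙ P - P‖) := by
  obtain ⟨B, hB, rfl⟩ := exists_hermitian_sqrt hP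
  set P := B * B
  let X := B * W * (B * W)ᴴ
  have hX : X.PosSemidef := Matrix.posSemidef_self_mul_conjTranspose _
  have hPX : (P - X).PosSemidef := by
    have h := (posSemidef_one_sub_of_isometry hW).mul_mul_conjTranspose_same B
    rwa [hB.eq, mul_sub, sub_mul, mul_one, ← Matrix.mul_assoc, Matrix.mul_assoc,
      show Wᴴ * B = (B * W)ᴴ by rw [Matrix.conjTranspose_mul, hB.eq]] at h
  have htrace : X.trace = (Wᴴ * P * W).trace := by
    rw [Matrix.trace_mul_comm, Matrix.conjTranspose_mul, hB.eq]
    simp only [P, Matrix.mul_assoc]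
  have hrank : (X ⊙ X).rank ≤ Fintype.card κ ^ 2 := by
    rw [sq]
    exact rank_hadamard_mul_mul_le _ _ _ _
  obtain ⟨J, W', hJ, hW', htr⟩ := exists_isometry_card_eq_rank (hX.hadamard hX).isHermitian
  have hJ2 : #J ≤ Fintype.card κ ^ 2 := hJ ▸ hrank
  refine ⟨J, W', hJ2, hW', ?_⟩
  have hmono : (W'ᴴ * (X ⊙ X) * W').trace ≤ (W'ᴴ * (P ⊙ P) * W').trace := by
    have h := (posSemidef_hadamard_self_sub hX hPX).conjTranspose_mul_mul_same W'
    rw [← sub_nonneg, ← Matrix.trace_sub, ← Matrix.sub_mul, ← Matrix.mul_sub]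
    exact h.trace_nonneg
  have hdefect : (W'ᴴ * (P ⊙ P) * W').trace ≤
      (W'ᴴ * P * W').trace + Fintype.card κ ^ 2 * ‖P ⊙ P - P‖ := by
    have h := (le_abs_self _).trans (abs_trace_conj_isometry_le hW' (P ⊙ P - P))
    rw [Matrix.mul_sub, Matrix.sub_mul, Matrix.trace_sub, sub_le_iff_le_add', Fintype.card_coe] at h
    exact h.trans (by gcongr; exact_mod_cast hJ2)
  calc (Wᴴ * P * W).trace ^ 2 ≤ Fintype.card n * (X ⊙ X).trace := htrace ▸ sq_trace_le X
    _ ≤ _ := by rw [← htr]; gcongr; exact hmono.trans hdefect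

end HadamardStep

section Growth

universe u

variable {n : Type u} [Fintype n] {P : Matrix n n ℝ} {N t : ℝ}

lemma trace_conj_isometry_pow_four_le_of_trace_le (hP : P.PosSemidef) (htrace : P.trace ≤ N * t)
    {κ : Type*} [Fintype κ] [DecidableEq κ] {W : Matrix n κ ℝ} (hW : Wᴴ * W = 1) :
    (Wᴴ * P * W).trace ^ 4 ≤ N ^ 4 * t ^ 4 := by
  rw [← mul_pow]
  exact pow_le_pow_left₀ (hP.conjTranspose_mul_mul_same W).trace_nonneg
    ((trace_conj_isometry_le hW hP).trans htrace) 4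

lemma pow_four_le_of_sq_le {x y ε r : ℝ} (hN : 0 ≤ N) (hr : 1 ≤ r) (hx : x ^ 2 ≤ N * (y + ε))
    (hy : y ^ 4 ≤ 16 * N ^ 4 * r ^ 2) (hε : ε ≤ N) : x ^ 4 ≤ 16 * N ^ 4 * r := by
  obtain ⟨s, hs, rfl⟩ : ∃ s : ℝ, 1 ≤ s ∧ s ^ 2 = r :=
    ⟨√r, Real.one_le_sqrt.2 hr, Real.sq_sqrt (zero_le_one.trans hr)⟩
  have hy' : y ≤ 2 * N * s :=
    le_of_pow_le_pow_left₀ four_ne_zero (by positivity) (hy.trans_eq (by ring))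
  have hx' : x ^ 2 ≤ 4 * N ^ 2 * s := by
    calc x ^ 2 ≤ N * (2 * N * s + N * s) := by
          refine hx.trans ?_
          gcongr
          exact hε.trans (le_mul_of_one_le_right hN hs)
      _ = 3 * N ^ 2 * s := by ring
      _ ≤ 4 * N ^ 2 * s := by gcongr; norm_num
  calc x ^ 4 = (x ^ 2) ^ 2 := by ring
    _ ≤ (4 * N ^ 2 * s) ^ 2 := by gcongr
    _ = 16 * N ^ 4 * s ^ 2 := by ring

/- Iterating `exists_isometry_sq_trace_le` squares the rank bound `r`; once it exceeds `t ^ 4` the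
trivial bound `trace P ≤ N * t` is good enough, and the exponent `1 / 4` is the fixed point of the
recursion. -/
lemma trace_conj_isometry_pow_four_le_of_le_pow (hP : P.PosSemidef)
    (hcard : (Fintype.card n : ℝ) ≤ N) (htrace : P.trace ≤ N * t)
    (hdefect : t ^ 8 * ‖P ⊙ P - P‖ ≤ N) (j : ℕ) :
    ∀ {r : ℕ}, 1 ≤ r → t ^ 4 ≤ (r : ℝ) ^ 2 ^ j →
      ∀ {κ : Type u} [Fintype κ] [DecidableEq κ] {W : Matrix n κ ℝ}, Wᴴ * W = 1 →
        Fintype.card κ ≤ r → (Wᴴ * P * W).trace ^ 4 ≤ 16 * N ^ 4 * r := by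
  classical
  have hN : 0 ≤ N := (Nat.cast_nonneg _).trans hcard
  have hlarge {r : ℕ} (htr : t ^ 4 ≤ r) {κ : Type u} [Fintype κ] [DecidableEq κ]
      {W : Matrix n κ ℝ} (hW : Wᴴ * W = 1) : (Wᴴ * P * W).trace ^ 4 ≤ 16 * N ^ 4 * r := by
    calc (Wᴴ * P * W).trace ^ 4 ≤ N ^ 4 * t ^ 4 :=
          trace_conj_isometry_pow_four_le_of_trace_le hP htrace hW
      _ ≤ 16 * N ^ 4 * r := by gcongr; linarith [pow_nonneg hN 4]
  induction j with
  | zero =>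
    intro r _ htr κ _ _ W hW _
    exact hlarge (by simpa using htr) hW
  | succ j ih =>
    intro r hr htr κ _ _ W hW hκ
    obtain htr' | htr' := le_total (t ^ 4) r
    · exact hlarge htr' hW
    obtain ⟨J, W', hJ, hW', hsq⟩ := exists_isometry_sq_trace_le hP hW
    have hε : (Fintype.card κ : ℝ) ^ 2 * ‖P ⊙ P - P‖ ≤ N := by
      calc (Fintype.card κ : ℝ) ^ 2 * ‖P ⊙ P - P‖ ≤ (t ^ 4) ^ 2 * ‖P ⊙ P - P‖ := by
            gcongr; exact le_trans (mod_cast hκ) htr'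
        _ = t ^ 8 * ‖P ⊙ P - P‖ := by ring
        _ ≤ N := hdefect
    have hy : (W'ᴴ * P * W').trace ^ 4 ≤ 16 * N ^ 4 * (r : ℝ) ^ 2 := by
      have h := ih (r := r ^ 2) (Nat.one_le_pow _ _ hr)
        (by rwa [Nat.cast_pow, ← pow_mul, ← pow_succ']) hW'
        (by rw [Fintype.card_coe]; exact hJ.trans (Nat.pow_le_pow_left hκ 2))
      rwa [Nat.cast_pow] at h
    refine pow_four_le_of_sq_le hN (mod_cast hr) (hsq.trans ?_) hy hε
    gcongr
    have := (hP.conjTranspose_mul_mul_same W').trace_nonneg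
    positivity

lemma trace_conj_isometry_pow_four_le (hP : P.PosSemidef) (hcard : (Fintype.card n : ℝ) ≤ N)
    (hnorm : ‖P‖ ≤ 2 * N) (htrace : P.trace ≤ N * t) (hdefect : t ^ 8 * ‖P ⊙ P - P‖ ≤ N)
    {κ : Type u} [Fintype κ] [DecidableEq κ] [Nonempty κ] {W : Matrix n κ ℝ} (hW : Wᴴ * W = 1) :
    (Wᴴ * P * W).trace ^ 4 ≤ 16 * N ^ 4 * Fintype.card κ := by
  obtain hκ | hκ := (Nat.one_le_iff_ne_zero.2 (Fintype.card_ne_zero (α := κ))).eq_or_lt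
  · have h : (Wᴴ * P * W).trace ≤ 2 * N := by
      have := (le_abs_self _).trans (abs_trace_conj_isometry_le hW P)
      rw [← hκ, Nat.cast_one, one_mul] at this
      linarith
    calc (Wᴴ * P * W).trace ^ 4 ≤ (2 * N) ^ 4 :=
          pow_le_pow_left₀ (hP.conjTranspose_mul_mul_same W).trace_nonneg h 4
      _ = 16 * N ^ 4 * Fintype.card κ := by rw [← hκ]; ring
  · obtain ⟨m, hm⟩ := pow_unbounded_of_one_lt (t ^ 4) (Nat.one_lt_cast (α := ℝ).2 hκ)
    refine trace_conj_isometry_pow_four_le_of_le_pow hP hcard htrace hdefect m hκ.le ?_ hW le_rfl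
    exact hm.le.trans (pow_le_pow_right₀ (mod_cast hκ.le) Nat.lt_two_pow_self.le)

end Growth

section Moments

lemma exists_equiv_antitone {ι α : Type*} [Fintype ι] [LinearOrder α] (l : ι → α) :
    ∃ e : Fin (Fintype.card ι) ≃ ι, Antitone (l ∘ e) := by
  let e₀ := (Fintype.equivFin ι).symm
  exact ⟨(Tuple.sort (OrderDual.toDual ∘ l ∘ e₀)).trans e₀,
    fun i j hij => Tuple.monotone_sort (OrderDual.toDual ∘ l ∘ e₀) hij⟩

lemma one_div_mul_sqrt_le {k : ℝ} (hk : 0 < k) :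
    1 / ((k + 1) * √(k + 1)) ≤ 2 * (1 / √k - 1 / √(k + 1)) := by
  have hx : 0 < √k := Real.sqrt_pos.2 hk
  have hxy : √k ≤ √(k + 1) := Real.sqrt_le_sqrt (by linarith)
  have hsq : √(k + 1) ^ 2 = √k ^ 2 + 1 := by
    rw [Real.sq_sqrt hk.le, Real.sq_sqrt (by linarith)]
  rw [← Real.sq_sqrt (by linarith : 0 ≤ k + 1), Real.sqrt_sq (Real.sqrt_nonneg _)]
  set x := √k
  set y := √(k + 1)
  have hy : 0 < y := hx.trans_le hxy
  calc 1 / (y ^ 2 * y) = 2 / (y * y * (y + y)) := by field_simp; norm_num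
    _ ≤ 2 / (x * y * (x + y)) := by gcongr
    _ = 2 * ((y ^ 2 - x ^ 2) / (x * y * (x + y))) := by rw [hsq, add_sub_cancel_left]; ring
    _ = 2 * (1 / x - 1 / y) := by field_simp; ring

lemma sum_Ico_one_div_mul_sqrt_le {r : ℕ} (hr : 0 < r) (s : ℕ) :
    ∑ k ∈ Finset.Ico r s, 1 / ((k + 1 : ℝ) * √(k + 1)) ≤ 2 / √r := by
  obtain hs | hs := le_total s r
  · rw [Finset.Ico_eq_empty_of_le hs, Finset.sum_empty]
    positivity
  calc ∑ k ∈ Finset.Ico r s, 1 / ((k + 1 : ℝ) * √(k + 1))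
      ≤ ∑ k ∈ Finset.Ico r s, 2 * (1 / √(k : ℝ) - 1 / √((k + 1 : ℕ) : ℝ)) := by
        refine Finset.sum_le_sum fun k hk => ?_
        rw [Nat.cast_succ]
        exact one_div_mul_sqrt_le (mod_cast hr.trans_le (Finset.mem_Ico.1 hk).1)
    _ = 2 * (1 / √(r : ℝ) - 1 / √(s : ℝ)) := by
        rw [← Finset.mul_sum]
        congr 1
        simpa only [neg_sub_neg] using Finset.sum_Ico_sub (fun k : ℕ => -(1 / √(k : ℝ))) hs
    _ ≤ 2 * (1 / √(r : ℝ)) := by gcongr; exact sub_le_self _ (by positivity)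
    _ = 2 / √r := mul_one_div _ _

lemma sq_le_of_antitone {m : ℕ} {l : Fin m → ℝ} (hanti : Antitone l) (hl : 0 ≤ l) {N : ℝ}
    (h : ∀ J : Finset (Fin m), (∑ i ∈ J, l i) ^ 4 ≤ N ^ 4 * #J) (k : Fin m) :
    l k ^ 2 ≤ N ^ 2 * (1 / ((k + 1 : ℝ) * √(k + 1))) := by
  have hc : (0 : ℝ) < k + 1 := by positivity
  have hsum : (k + 1 : ℝ) * l k ≤ ∑ i ∈ Finset.Iic k, l i := by
    calc (k + 1 : ℝ) * l k = ∑ _i ∈ Finset.Iic k, l k := by simp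
      _ ≤ ∑ i ∈ Finset.Iic k, l i := Finset.sum_le_sum fun i hi => hanti (Finset.mem_Iic.1 hi)
  have hfour : (k + 1 : ℝ) * ((k + 1) ^ 3 * l k ^ 4) ≤ (k + 1) * N ^ 4 := by
    calc (k + 1 : ℝ) * ((k + 1) ^ 3 * l k ^ 4) = ((k + 1) * l k) ^ 4 := by ring
      _ ≤ (∑ i ∈ Finset.Iic k, l i) ^ 4 :=
        pow_le_pow_left₀ (mul_nonneg hc.le (hl k)) hsum 4
      _ ≤ N ^ 4 * #(Finset.Iic k) := h _
      _ = (k + 1) * N ^ 4 := by rw [Fin.card_Iic]; push_cast; ring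
  have hsq : ((k + 1) * √(k + 1) * l k ^ 2) ^ 2 ≤ (N ^ 2) ^ 2 := by
    calc ((k + 1) * √(k + 1) * l k ^ 2) ^ 2 = (k + 1 : ℝ) ^ 2 * √(k + 1) ^ 2 * l k ^ 4 := by ring
      _ = (k + 1 : ℝ) ^ 3 * l k ^ 4 := by rw [Real.sq_sqrt hc.le]; ring
      _ ≤ (N ^ 2) ^ 2 := by linarith [le_of_mul_le_mul_left hfour hc]
  rw [mul_one_div, le_div_iff₀' (by positivity)]
  exact le_of_sq_le_sq hsq (sq_nonneg N)

lemma sum_filter_sq_le_of_antitone {m : ℕ} {l : Fin m → ℝ} (hanti : Antitone l) (hl : 0 ≤ l)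
    {N : ℝ} (h : ∀ J : Finset (Fin m), (∑ i ∈ J, l i) ^ 4 ≤ N ^ 4 * #J) {r : ℕ} (hr : 0 < r) :
    ∑ i with r ≤ i.val, l i ^ 2 ≤ N ^ 2 * (2 / √r) := by
  calc ∑ i with r ≤ i.val, l i ^ 2
      ≤ ∑ i : Fin m with r ≤ i.val, N ^ 2 * (1 / ((i + 1 : ℝ) * √(i + 1))) :=
        Finset.sum_le_sum fun i _ => sq_le_of_antitone hanti hl h i
    _ = N ^ 2 * ∑ k ∈ Finset.Ico r m, 1 / ((k + 1 : ℝ) * √(k + 1)) := by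
        rw [← Finset.mul_sum, Finset.sum_filter, Fin.sum_univ_eq_sum_range
          (fun k => if r ≤ k then 1 / ((k + 1 : ℝ) * √(k + 1)) else 0), ← Finset.sum_filter]
        congr 2
        ext k
        simp [and_comm]
    _ ≤ N ^ 2 * (2 / √r) := by gcongr; exact sum_Ico_one_div_mul_sqrt_le hr m

lemma half_mul_le_sum_filter_sq_of_antitone {m : ℕ} {l : Fin m → ℝ} (hanti : Antitone l)
    (hl : 0 ≤ l) {N q : ℝ} (hq : 0 < q)
    (h : ∀ J : Finset (Fin m), (∑ i ∈ J, l i) ^ 4 ≤ N ^ 4 * #J)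
    (hsq : q * N ^ 2 ≤ ∑ i, l i ^ 2) {r : ℕ} (hr : 0 < r) (hrq : 4 / q ≤ √r) :
    q * N ^ 2 / 2 ≤ ∑ i with i.val < r, l i ^ 2 := by
  have htail : ∑ i with r ≤ i.val, l i ^ 2 ≤ q * N ^ 2 / 2 := by
    calc ∑ i with r ≤ i.val, l i ^ 2 ≤ N ^ 2 * (2 / √r) :=
          sum_filter_sq_le_of_antitone hanti hl h hr
      _ ≤ N ^ 2 * (2 / (4 / q)) := by gcongr
      _ = q * N ^ 2 / 2 := by field_simp; ring
  have hsplit := Finset.sum_filter_add_sum_filter_not Finset.univ (fun i : Fin m => i.val < r)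
    fun i => l i ^ 2
  simp only [not_lt] at hsplit
  linarith

lemma sq_sum_sq_le_sum_mul_sum_cube {ι : Type*} (I : Finset ι) {l : ι → ℝ} (hl : 0 ≤ l) :
    (∑ i ∈ I, l i ^ 2) ^ 2 ≤ (∑ i ∈ I, l i) * ∑ i ∈ I, l i ^ 3 :=
  Finset.sum_sq_le_sum_mul_sum_of_sq_le_mul I (fun i _ => hl i) (fun i _ => pow_nonneg (hl i) 3)
    fun i _ => (by ring : (l i ^ 2) ^ 2 = l i * l i ^ 3).le

lemma exists_nat_le_sqrt_and_le {q : ℝ} (hq : 0 < q) (hq1 : q ≤ 1) :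
    ∃ r : ℕ, 0 < r ∧ 4 / q ≤ √r ∧ (r : ℝ) ≤ (5 / q) ^ 2 := by
  refine ⟨⌈(4 / q) ^ 2⌉₊, Nat.ceil_pos.2 (by positivity), Real.le_sqrt_of_sq_le (Nat.le_ceil _), ?_⟩
  have h1 : 1 ≤ 1 / q ^ 2 := (one_le_div (by positivity)).2 (pow_le_one₀ hq.le hq1)
  calc (⌈(4 / q) ^ 2⌉₊ : ℝ) ≤ (4 / q) ^ 2 + 1 := (Nat.ceil_lt_add_one (by positivity)).le
    _ = 16 * (1 / q ^ 2) + 1 := by ring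
    _ ≤ 16 * (1 / q ^ 2) + 9 * (1 / q ^ 2) := by gcongr; linarith
    _ = (5 / q) ^ 2 := by ring

lemma sum_cube_ge_of_antitone {m : ℕ} {l : Fin m → ℝ} (hanti : Antitone l) (hl : 0 ≤ l) {N q : ℝ}
    (hN : 0 < N) (hq : 0 < q) (hq1 : q ≤ 1)
    (h : ∀ J : Finset (Fin m), (∑ i ∈ J, l i) ^ 4 ≤ N ^ 4 * #J)
    (hsq : q * N ^ 2 ≤ ∑ i, l i ^ 2) : q ^ 2 * √q * N ^ 3 ≤ 9 * ∑ i, l i ^ 3 := by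
  obtain ⟨r, hr, hr4, hr5⟩ := exists_nat_le_sqrt_and_le hq hq1
  let I : Finset (Fin m) := {i | i.val < r}
  have hI : #I ≤ r := Fin.card_filter_val_lt.trans_le (min_le_right m r)
  have hIsq : q * N ^ 2 / 2 ≤ ∑ i ∈ I, l i ^ 2 :=
    half_mul_le_sum_filter_sq_of_antitone hanti hl hq h hsq hr hr4
  have hIsum : (∑ i ∈ I, l i) * √q ≤ 9 / 4 * N := by
    refine le_of_pow_le_pow_left₀ four_ne_zero (by positivity) ?_
    calc ((∑ i ∈ I, l i) * √q) ^ 4 = (∑ i ∈ I, l i) ^ 4 * (√q ^ 2) ^ 2 := by ring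
      _ ≤ N ^ 4 * (5 / q) ^ 2 * q ^ 2 := by
        rw [Real.sq_sqrt hq.le]
        gcongr
        exact (h I).trans (by gcongr; exact le_trans (mod_cast hI) hr5)
      _ = 25 * N ^ 4 := by field_simp; norm_num
      _ ≤ (9 / 4 * N) ^ 4 := by rw [mul_pow]; gcongr; norm_num
  have hcube : ∑ i ∈ I, l i ^ 3 ≤ ∑ i, l i ^ 3 :=
    Finset.sum_le_univ_sum_of_nonneg fun i => pow_nonneg (hl i) 3
  have h0 : 0 ≤ ∑ i ∈ I, l i ^ 3 := Finset.sum_nonneg fun i _ => pow_nonneg (hl i) 3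
  refine le_of_mul_le_mul_left ?_ hN
  calc N * (q ^ 2 * √q * N ^ 3) = 4 * (q * N ^ 2 / 2) ^ 2 * √q := by ring
    _ ≤ 4 * (∑ i ∈ I, l i ^ 2) ^ 2 * √q := by gcongr
    _ ≤ 4 * ((∑ i ∈ I, l i) * ∑ i ∈ I, l i ^ 3) * √q := by
      gcongr; exact sq_sum_sq_le_sum_mul_sum_cube I hl
    _ = 4 * ((∑ i ∈ I, l i) * √q) * ∑ i ∈ I, l i ^ 3 := by ring
    _ ≤ 4 * (9 / 4 * N) * ∑ i, l i ^ 3 := by gcongr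
    _ = N * (9 * ∑ i, l i ^ 3) := by ring

lemma sum_cube_ge {ι : Type*} [Fintype ι] {l : ι → ℝ} (hl : 0 ≤ l) {N q : ℝ}
    (hN : 0 < N) (hq : 0 < q) (hq1 : q ≤ 1)
    (h : ∀ J : Finset ι, (∑ i ∈ J, l i) ^ 4 ≤ N ^ 4 * #J)
    (hsq : q * N ^ 2 ≤ ∑ i, l i ^ 2) : q ^ 2 * √q * N ^ 3 ≤ 9 * ∑ i, l i ^ 3 := by
  obtain ⟨e, he⟩ := exists_equiv_antitone l
  rw [← e.sum_comp] at hsq ⊢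
  refine sum_cube_ge_of_antitone he (fun i => hl (e i)) hN hq hq1 (fun J => ?_) hsq
  simpa using h (J.map e.toEmbedding)

end Moments

section HadamardIdempotent

lemma apply_mem_Icc_of_hadamard_self {n : Type*} {A : Matrix n n ℝ} (hA : A ⊙ A = A)
    (i j : n) : A i j ∈ Set.Icc 0 1 := by
  have h : A i j * A i j = A i j := congrFun (congrFun hA i) j
  constructor <;> nlinarith

variable {n : Type*} [Fintype n] {A : Matrix n n ℝ}

lemma frobenius_norm_sq_of_hadamard_self (hA : A ⊙ A = A) : ‖A‖ ^ 2 = ∑ i, ∑ j, A i j := by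
  rw [frobenius_norm_sq]
  simp only [sq]
  exact Finset.sum_congr rfl fun i _ => Finset.sum_congr rfl fun j _ =>
    congrFun (congrFun hA i) j

lemma frobenius_norm_le_card_of_hadamard_self (hA : A ⊙ A = A) : ‖A‖ ≤ Fintype.card n := by
  refine le_of_sq_le_sq ?_ (Nat.cast_nonneg _)
  calc ‖A‖ ^ 2 = ∑ i, ∑ j, A i j := frobenius_norm_sq_of_hadamard_self hA
    _ ≤ ∑ _i : n, ∑ _j : n, 1 := by gcongr; exact (apply_mem_Icc_of_hadamard_self hA _ _).2
    _ = (Fintype.card n : ℝ) ^ 2 := by simp [sq]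

end HadamardIdempotent

section TraceCube

variable {n : Type*} [Fintype n] [DecidableEq n] {P A : Matrix n n ℝ} {N t q : ℝ}

lemma trace_pow_eq_sum_eigenvalues_pow (hA : A.IsHermitian) (k : ℕ) :
    (A ^ k).trace = ∑ i, hA.eigenvalues i ^ k := by
  conv_lhs => rw [hA.spectral_theorem, ← map_pow, Matrix.diagonal_pow,
    Unitary.conjStarAlgAut_apply, Matrix.trace_mul_cycle, Unitary.coe_star_mul_self, one_mul,
    Matrix.trace_diagonal]
  rfl

lemma trace_cube_ge (hP : P.PosSemidef) (hN : 0 < N) (hcard : (Fintype.card n : ℝ) ≤ N)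
    (hnorm : ‖P‖ ≤ 2 * N) (htrace : P.trace ≤ N * t) (hdefect : t ^ 8 * ‖P ⊙ P - P‖ ≤ N)
    (hq : 0 < q) (hq1 : q ≤ 1) (hPq : q * (2 * N) ^ 2 ≤ ‖P‖ ^ 2) :
    q ^ 2 * √q * (2 * N) ^ 3 ≤ 9 * (P ^ 3).trace := by
  rw [frobenius_norm_sq_eq_trace, hP.isHermitian.eq, ← sq,
    trace_pow_eq_sum_eigenvalues_pow hP.isHermitian] at hPq
  rw [trace_pow_eq_sum_eigenvalues_pow hP.isHermitian]
  refine sum_cube_ge hP.eigenvalues_nonneg (by positivity) hq hq1 (fun J => ?_) hPq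
  obtain rfl | hJ := J.eq_empty_or_nonempty
  · simp
  have : Nonempty J := hJ.to_subtype
  have h := trace_conj_isometry_pow_four_le hP hcard hnorm htrace hdefect
    (eigenvectorCols_isometry hP.isHermitian J)
  rw [trace_conj_eigenvectorCols, Fintype.card_coe] at h
  exact h.trans_eq (by ring)

lemma frobenius_norm_hadamard_self_sub_le (hP : P.PosSemidef) (hA : A ⊙ A = A) {d : ℝ}
    (hd0 : 0 ≤ d) (hd : ∀ i, P i i ≤ d) : ‖P ⊙ P - P‖ ≤ (d + 1) * ‖P - A‖ := by
  refine frobenius_norm_le_of_abs_le (by positivity) fun i j => ?_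
  have hAij : A i j * A i j = A i j := congrFun (congrFun hA i) j
  have ⟨hA0, hA1⟩ := apply_mem_Icc_of_hadamard_self hA i j
  have hPij := abs_le.1 (abs_apply_le_of_diag_le hP hd i j)
  have hfactor : (P ⊙ P - P) i j = (P i j + A i j - 1) * (P - A) i j := by
    simp only [Matrix.sub_apply, Matrix.hadamard_apply]
    linear_combination hAij
  rw [hfactor, abs_mul]
  gcongr
  exact abs_le.2 ⟨by linarith, by linarith⟩

lemma trace_cube_le_add (hA : ‖A‖ ≤ N) (hP : ‖P‖ ≤ 2 * N) :
    (P ^ 3).trace ≤ (A ^ 3).trace + 7 * N ^ 2 * ‖P - A‖ := by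
  have htele : (P ^ 3).trace = (A ^ 3).trace + (P * P * (P - A)).trace + (A * P * (P - A)).trace +
      (A * A * (P - A)).trace := by
    simp only [mul_sub, Matrix.trace_sub, pow_succ, pow_zero, one_mul]
    rw [Matrix.trace_mul_cycle P P A, Matrix.trace_mul_cycle A P A]
    ring
  linarith [trace_mul_mul_le hP hP (P - A), trace_mul_mul_le hA hP (P - A),
    trace_mul_mul_le hA hA (P - A)]

lemma trace_cube_ge_of_near_psd {p d e : ℝ} (hA : A ⊙ A = A) (hP : P.PosSemidef)
    (hN : 0 < N) (hcard : (Fintype.card n : ℝ) ≤ N) (hd0 : 0 ≤ d) (hd : ∀ i, P i i ≤ d)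
    (htrace : P.trace ≤ N * t) (hPA : ‖P - A‖ ≤ e) (hdefect : t ^ 8 * ((d + 1) * e) ≤ N)
    (hp : 0 < p) (hp1 : p ≤ 1) (hAp : p * N ^ 2 / 4 ≤ ‖A‖ ^ 2) (hep : e ≤ p * N / 16) :
    p ^ 2 * √p * N ^ 3 / 8748 ≤ (A ^ 3).trace + 7 * N ^ 2 * e := by
  have hAN : ‖A‖ ≤ N := (frobenius_norm_le_card_of_hadamard_self hA).trans hcard
  have hPN : ‖P‖ ≤ 2 * N := by
    have : ‖P‖ ≤ ‖A‖ + ‖P - A‖ := norm_le_norm_add_norm_sub' P A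
    nlinarith
  have hPp : p / 36 * (2 * N) ^ 2 ≤ ‖P‖ ^ 2 := by
    have h : ‖A‖ ≤ ‖P‖ + e := (norm_le_norm_add_norm_sub P A).trans (by gcongr)
    have he : 0 ≤ e := (norm_nonneg _).trans hPA
    have hsq : ‖A‖ ^ 2 ≤ 2 * ‖P‖ ^ 2 + 2 * e ^ 2 := by
      nlinarith [norm_nonneg A, sq_nonneg (‖P‖ - e)]
    have hesq : e ^ 2 ≤ p * N ^ 2 / 256 := by
      calc e ^ 2 ≤ (p * N / 16) ^ 2 := by gcongr
        _ = p * (p * N ^ 2 / 256) := by ring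
        _ ≤ 1 * (p * N ^ 2 / 256) := by gcongr
        _ = p * N ^ 2 / 256 := one_mul _
    nlinarith [mul_pos hp (pow_pos hN 2)]
  have h := trace_cube_ge hP hN hcard hPN htrace (hdefect.trans' ?_) (by positivity : 0 < p / 36)
    (by linarith) hPp
  · have hsqrt : √(p / 36) = √p / 6 := by
      rw [Real.sqrt_div hp.le, show (36 : ℝ) = 6 ^ 2 by norm_num, Real.sqrt_sq (by norm_num)]
    rw [hsqrt] at h
    have : 7 * N ^ 2 * ‖P - A‖ ≤ 7 * N ^ 2 * e := by gcongr
    linarith [trace_cube_le_add hAN hPN]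
  · have hPP := frobenius_norm_hadamard_self_sub_le hP hA hd0 hd
    have : 0 ≤ t ^ 8 := by positivity
    gcongr
    exact hPP.trans (by gcongr)

end TraceCube

section HeavyRows

lemma card_filter_lt_mul_le_sum {ι : Type*} [Fintype ι] {f : ι → ℝ} (hf : ∀ i, 0 ≤ f i) (c : ℝ) :
    #{i | c < f i} * c ≤ ∑ i, f i :=
  calc #{i | c < f i} * c ≤ ∑ i with c < f i, f i := by
        rw [← nsmul_eq_mul]
        exact Finset.card_nsmul_le_sum _ _ _ fun i hi => (Finset.mem_filter.1 hi).2.le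
    _ ≤ ∑ i, f i := Finset.sum_le_univ_sum_of_nonneg hf

lemma exists_subset_card_eq_mul_sum_le {ι : Type*} (T : Finset ι) (f : ι → ℝ) {m : ℕ}
    (hm : m ≤ #T) : ∃ U ⊆ T, #U = m ∧ m * ∑ i ∈ T, f i ≤ #T * ∑ i ∈ U, f i := by
  classical
  induction hm using Nat.decreasingInduction with
  | self => exact ⟨T, subset_rfl, rfl, le_rfl⟩
  | of_succ m _ ih =>
    obtain ⟨U, hUT, hUcard, hU⟩ := ih
    obtain ⟨u, hu, hmin⟩ := U.exists_min_image f (Finset.card_pos.1 (by omega))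
    refine ⟨U.erase u, (Finset.erase_subset _ _).trans hUT, by
      rw [Finset.card_erase_of_mem hu, hUcard, Nat.add_sub_cancel], ?_⟩
    have hmean : (m + 1) * f u ≤ ∑ i ∈ U, f i := by
      simpa [hUcard] using Finset.card_nsmul_le_sum U f (f u) hmin
    have herase : m * ∑ i ∈ U, f i ≤ (m + 1) * ∑ i ∈ U.erase u, f i := by
      rw [Finset.sum_erase_eq_sub hu]
      linarith
    push_cast at hU
    refine le_of_mul_le_mul_left ?_ (by positivity : (0 : ℝ) < m + 1)
    calc (m + 1) * (m * ∑ i ∈ T, f i) = m * ((m + 1) * ∑ i ∈ T, f i) := by ring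
      _ ≤ m * (#T * ∑ i ∈ U, f i) := by gcongr
      _ = #T * (m * ∑ i ∈ U, f i) := by ring
      _ ≤ #T * ((m + 1) * ∑ i ∈ U.erase u, f i) := by gcongr
      _ = (m + 1) * (#T * ∑ i ∈ U.erase u, f i) := by ring

lemma sum_sum_le_sum_sum_of_subset {ι : Type*} {w : ι → ι → ℝ} (hw0 : ∀ i j, 0 ≤ w i j)
    {S S' T T' : Finset ι} (hS : S ⊆ S') (hT : T ⊆ T') :
    ∑ i ∈ S, ∑ j ∈ T, w i j ≤ ∑ i ∈ S', ∑ j ∈ T', w i j :=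
  (Finset.sum_le_sum fun i _ => Finset.sum_le_sum_of_subset_of_nonneg hT fun j _ _ => hw0 i j).trans
    (Finset.sum_le_sum_of_subset_of_nonneg hS fun i _ _ => Finset.sum_nonneg fun j _ => hw0 i j)

variable {V : Type*} [Fintype V] {w : V → V → ℝ} {p : ℝ}

lemma exists_mul_sum_le_card_mul_sum_sum (hw0 : ∀ i j, 0 ≤ w i j)
    (H : Finset V) {r : ℕ} (hr : r ≤ Fintype.card V) :
    ∃ S : Finset V, r ≤ #S ∧ #S ≤ #H + r ∧
      r * ∑ i ∈ H, ∑ j, w i j ≤ Fintype.card V * ∑ i ∈ S, ∑ j ∈ S, w i j := by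
  classical
  obtain ⟨U, -, hUcard, hU⟩ := exists_subset_card_eq_mul_sum_le Finset.univ
    (fun j => ∑ i ∈ H, w i j) hr
  refine ⟨H ∪ U, hUcard ▸ Finset.card_le_card Finset.subset_union_right,
    hUcard ▸ Finset.card_union_le H U, ?_⟩
  rw [Finset.sum_comm]
  refine hU.trans ?_
  rw [Finset.sum_comm, Finset.card_univ]
  gcongr
  exact sum_sum_le_sum_sum_of_subset hw0 Finset.subset_union_left Finset.subset_union_right

lemma sum_heavy_rows_le (hw0 : ∀ i j, 0 ≤ w i j) (hp : 0 < p) (hn : 10000 ≤ Fintype.card V)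
    (hsum : ∑ i, ∑ j, w i j = p * (Fintype.card V : ℝ) ^ 2)
    (hsparse : ∀ S : Finset V, (Fintype.card V : ℝ) / 8 ≤ #S →
      ∑ i ∈ S, ∑ j ∈ S, w i j ≤ 2 * p * (#S : ℝ) ^ 2) :
    ∑ i with 64 * p * Fintype.card V < ∑ j, w i j, ∑ j, w i j ≤
      p * (Fintype.card V : ℝ) ^ 2 / 3 := by
  set n : ℝ := (Fintype.card V : ℝ) with hndef
  set H : Finset V := {i | 64 * p * n < ∑ j, w i j}
  have hn' : (10000 : ℝ) ≤ n := by rw [hndef]; exact_mod_cast hn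
  have hHcard : #H ≤ n / 64 := by
    have h : #H * (64 * p * n) ≤ p * n ^ 2 := hsum ▸
      card_filter_lt_mul_le_sum (fun i => Finset.sum_nonneg fun j _ => hw0 i j) (64 * p * n)
    refine le_of_mul_le_mul_right ?_ (by positivity : 0 < 64 * p * n)
    linarith
  have hceil : (⌈n / 8⌉₊ : ℝ) < n / 8 + 1 := Nat.ceil_lt_add_one (by positivity)
  obtain ⟨S, hSge, hSle, hS⟩ := exists_mul_sum_le_card_mul_sum_sum hw0 H
    (by rw [Nat.ceil_le]; linarith : ⌈n / 8⌉₊ ≤ Fintype.card V)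
  have hSge' : n / 8 ≤ #S := (Nat.le_ceil _).trans (by exact_mod_cast hSge)
  have hSle' : #S ≤ 0.141 * n := by
    have : (#S : ℝ) ≤ #H + ⌈n / 8⌉₊ := by exact_mod_cast hSle
    linarith
  have hX : 0 ≤ ∑ i ∈ H, ∑ j, w i j :=
    Finset.sum_nonneg fun i _ => Finset.sum_nonneg fun j _ => hw0 i j
  have hmain : n / 8 * ∑ i ∈ H, ∑ j, w i j ≤ n * (2 * p * (0.141 * n) ^ 2) := by
    calc n / 8 * ∑ i ∈ H, ∑ j, w i j ≤ ⌈n / 8⌉₊ * ∑ i ∈ H, ∑ j, w i j := by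
          gcongr; exact Nat.le_ceil _
      _ ≤ n * ∑ i ∈ S, ∑ j ∈ S, w i j := hS
      _ ≤ n * (2 * p * (#S : ℝ) ^ 2) := by gcongr; exact hsparse S hSge'
      _ ≤ n * (2 * p * (0.141 * n) ^ 2) := by gcongr
  have hpn : 0 < p * n ^ 2 := by positivity
  refine le_of_mul_le_mul_left (hmain.trans ?_) (by positivity : 0 < n / 8)
  nlinarith [hpn]

lemma sum_sum_le_sum_sum_add_two_mul [DecidableEq V] (hw : ∀ i j, w i j = w j i)
    (hw0 : ∀ i j, 0 ≤ w i j) (Z : Finset V) :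
    ∑ i, ∑ j, w i j ≤ ∑ i ∈ Z, ∑ j ∈ Z, w i j + 2 * ∑ i ∈ Zᶜ, ∑ j, w i j := by
  have hrows : ∑ i, ∑ j, w i j = ∑ i ∈ Z, ∑ j, w i j + ∑ i ∈ Zᶜ, ∑ j, w i j :=
    (Finset.sum_add_sum_compl Z _).symm
  have hcols : ∑ i ∈ Z, ∑ j, w i j = ∑ i ∈ Z, ∑ j ∈ Z, w i j + ∑ i ∈ Z, ∑ j ∈ Zᶜ, w i j := by
    simp only [← Finset.sum_add_distrib, Finset.sum_add_sum_compl]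
  have hsymm : ∑ i ∈ Z, ∑ j ∈ Zᶜ, w i j ≤ ∑ i ∈ Zᶜ, ∑ j, w i j := by
    rw [Finset.sum_comm]
    calc ∑ j ∈ Zᶜ, ∑ i ∈ Z, w i j = ∑ j ∈ Zᶜ, ∑ i ∈ Z, w j i :=
          Finset.sum_congr rfl fun j _ => Finset.sum_congr rfl fun i _ => hw i j
      _ ≤ ∑ j ∈ Zᶜ, ∑ i, w j i :=
          sum_sum_le_sum_sum_of_subset hw0 subset_rfl (Finset.subset_univ Z)
  linarith

lemma exists_finset_sum_sum_ge {D : V → ℝ} {d : ℝ} (hw : ∀ i j, w i j = w j i)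
    (hw01 : ∀ i j, w i j ∈ Set.Icc 0 1) (hD : ∀ i, 0 ≤ D i) (hd : 0 < d)
    (hsum : ∑ i, ∑ j, w i j = p * (Fintype.card V : ℝ) ^ 2)
    (hheavy : ∑ i with 64 * p * Fintype.card V < ∑ j, w i j, ∑ j, w i j ≤
      p * (Fintype.card V : ℝ) ^ 2 / 3)
    (hDd : 24 * ∑ i, D i ≤ d * (p * Fintype.card V)) :
    ∃ Z : Finset V, (∀ i ∈ Z, ∑ j, w i j ≤ 64 * p * Fintype.card V) ∧ (∀ i ∈ Z, D i ≤ d) ∧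
      p * (Fintype.card V : ℝ) ^ 2 / 4 ≤ ∑ i ∈ Z, ∑ j ∈ Z, w i j := by
  classical
  set n : ℝ := (Fintype.card V : ℝ) with hndef
  set H : Finset V := {i | 64 * p * n < ∑ j, w i j} with hH
  set B : Finset V := {i | d < D i} with hB
  refine ⟨(H ∪ B)ᶜ, fun i hi => ?_, fun i hi => ?_, ?_⟩
  · exact not_lt.1 fun h => Finset.mem_compl.1 hi (Finset.mem_union_left _ (by simpa [hH] using h))
  · exact not_lt.1 fun h => Finset.mem_compl.1 hi (Finset.mem_union_right _ (by simpa [hB] using h))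
  have hrow (i : V) : 0 ≤ ∑ j, w i j := Finset.sum_nonneg fun j _ => (hw01 i j).1
  have hBrows : ∑ i ∈ B, ∑ j, w i j ≤ p * n ^ 2 / 24 := by
    have hcard : #B * d ≤ ∑ i, D i := card_filter_lt_mul_le_sum hD d
    calc ∑ i ∈ B, ∑ j, w i j ≤ ∑ _i ∈ B, ∑ _j : V, 1 := by gcongr; exact (hw01 _ _).2
      _ = #B * n := by simp [hndef]
      _ ≤ p * n / 24 * n := by
        gcongr
        refine le_of_mul_le_mul_right ?_ hd
        linarith
      _ = p * n ^ 2 / 24 := by ring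
  have hunion : ∑ i ∈ H ∪ B, ∑ j, w i j ≤ ∑ i ∈ H, ∑ j, w i j + ∑ i ∈ B, ∑ j, w i j := by
    rw [← Finset.sum_union_inter]
    exact le_add_of_nonneg_right (Finset.sum_nonneg fun i _ => hrow i)
  have h := sum_sum_le_sum_sum_add_two_mul hw (fun i j => (hw01 i j).1) (H ∪ B)ᶜ
  rw [compl_compl, hsum] at h
  linarith

end HeavyRows

section Graph

variable {V : Type*} (G : SimpleGraph V)

lemma adjMat_eq_adjMatrix [DecidableRel G.Adj] : adjMat G = G.adjMatrix ℝ := by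
  ext i j
  simp only [adjMat, Matrix.of_apply, SimpleGraph.adjMatrix_apply]
  congr

lemma adjMat_hadamard_self : adjMat G ⊙ adjMat G = adjMat G := by
  ext i j
  simp only [Matrix.hadamard_apply, adjMat, Matrix.of_apply]
  split_ifs <;> norm_num

lemma adjMat_apply_comm (i j : V) : adjMat G i j = adjMat G j i := by
  classical
  rw [adjMat_eq_adjMatrix]
  exact G.isSymm_adjMatrix.apply j i

lemma adjMat_isHermitian : (adjMat G).IsHermitian :=
  Matrix.IsHermitian.ext fun i j => adjMat_apply_comm G j i

lemma adjMat_apply_mem_Icc (i j : V) : adjMat G i j ∈ Set.Icc 0 1 :=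
  apply_mem_Icc_of_hadamard_self (adjMat_hadamard_self G) i j

variable [Fintype V]

lemma card_neighborFinset_eq_sum_adjMat [DecidableRel G.Adj] (v : V) :
    (#(G.neighborFinset v) : ℝ) = ∑ j, adjMat G v j := by
  simp [adjMat_eq_adjMatrix, G.neighborFinset_eq_filter, SimpleGraph.adjMatrix_apply]

lemma density_mul_card_sq : density G * (Fintype.card V : ℝ) ^ 2 = ∑ i, ∑ j, adjMat G i j := by
  classical
  have hedges : ∑ i, ∑ j, adjMat G i j = 2 * (G.edgeSet.ncard : ℝ) := by
    rw [← G.coe_edgeFinset, Set.ncard_coe_finset]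
    simp only [← card_neighborFinset_eq_sum_adjMat G, G.card_neighborFinset_eq_degree]
    exact_mod_cast G.sum_degrees_eq_twice_card_edges
  rw [hedges, density]
  obtain hV | hV := isEmpty_or_nonempty V
  · simp [← hedges]
  · field_simp

omit [Fintype V] in
lemma density_induce_mul_card_sq (S : Finset V) :
    density (G.induce (S : Set V)) * (#S : ℝ) ^ 2 = ∑ i ∈ S, ∑ j ∈ S, adjMat G i j := by
  have h := density_mul_card_sq (G.induce (S : Set V))
  rw [show Fintype.card (S : Set V) = #S from Fintype.card_coe S] at h
  rw [h, ← Finset.sum_coe_sort S]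
  refine Finset.sum_congr rfl fun i _ => ?_
  rw [← Finset.sum_coe_sort S]
  rfl

lemma density_le_one : density G ≤ 1 := by
  obtain hV | hV := isEmpty_or_nonempty V
  · simp [density]
  · refine le_of_mul_le_mul_right ?_ (by positivity : 0 < (Fintype.card V : ℝ) ^ 2)
    calc density G * (Fintype.card V : ℝ) ^ 2 = ∑ i, ∑ j, adjMat G i j := density_mul_card_sq G
      _ ≤ ∑ _i : V, ∑ _j : V, 1 := by gcongr with i _ j _; exact (adjMat_apply_mem_Icc G i j).2
      _ = 1 * (Fintype.card V : ℝ) ^ 2 := by simp [sq]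

variable {G}

lemma neg_trace_adjMat_mul_le_two_mul_spStar {M : Matrix V V ℝ} (hM : M.PosSemidef)
    (hd : ∀ i, M i i ≤ 1) : -(adjMat G * M).trace ≤ 2 * spStar G := by
  classical
  have hbdd : BddAbove {x : ℝ | ∃ M : Matrix V V ℝ, M.PosSemidef ∧ (∀ i, M i i ≤ 1) ∧
      x = (1 / 2) * ∑ i, ∑ j, (-(adjMat G)) i j * M i j} := by
    refine ⟨(1 / 2) * ∑ _i : V, ∑ _j : V, (1 : ℝ), ?_⟩
    rintro x ⟨M, hM, hd, rfl⟩
    gcongr with i _ j _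
    have ⟨hA0, hA1⟩ := adjMat_apply_mem_Icc G i j
    have := abs_le.1 (abs_apply_le_of_diag_le hM hd i j)
    rw [Matrix.neg_apply]
    nlinarith
  have h : (1 / 2) * ∑ i, ∑ j, (-(adjMat G)) i j * M i j ≤ spStar G :=
    le_csSup hbdd ⟨M, hM, hd, rfl⟩
  have htrace : (adjMat G * M).trace = ∑ i, ∑ j, adjMat G i j * M i j := by
    simp only [Matrix.trace, Matrix.diag_apply, Matrix.mul_apply]
    exact Finset.sum_congr rfl fun i _ => Finset.sum_congr rfl fun j _ => by
      rw [← hM.isHermitian.apply j i, star_trivial]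
  simp only [Matrix.neg_apply, neg_mul, Finset.sum_neg_distrib] at h
  linarith

lemma exists_posSemidef_add_adjMat [Nonempty V] : ∃ N : Matrix V V ℝ, N.PosSemidef ∧
    (adjMat G + N).PosSemidef ∧ N.trace ≤ 2 * spStar G ∧
    ‖N‖ ^ 2 ≤ √(Fintype.card V) * (2 * spStar G) := by
  classical
  obtain ⟨N, Q, hN, hAN, hANN, hQ, hQd, hAQ⟩ := exists_negPart (adjMat_isHermitian G)
  refine ⟨N, hN, hAN, ?_, ?_⟩
  · simpa only [hAQ, Matrix.trace_neg, neg_neg] using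
      neg_trace_adjMat_mul_le_two_mul_spStar (G := G) hQ hQd
  have hNd (i : V) : N i i ≤ √(Fintype.card V) := by
    refine Real.le_sqrt_of_sq_le ?_
    calc N i i ^ 2 ≤ ∑ j, N i j ^ 2 := Finset.single_le_sum (f := fun j => N i j ^ 2)
          (fun j _ => sq_nonneg _) (Finset.mem_univ i)
      _ ≤ ∑ j, adjMat G i j ^ 2 :=
          sum_sq_negPart_le (adjMat_isHermitian G) hN.isHermitian hANN i
      _ ≤ ∑ _j : V, 1 := by
          gcongr with j _
          have ⟨hA0, hA1⟩ := adjMat_apply_mem_Icc G i j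
          exact pow_le_one₀ hA0 hA1
      _ = Fintype.card V := by simp
  have hcard : 0 < √(Fintype.card V) := by simp [Fintype.card_pos]
  have h := neg_trace_adjMat_mul_le_two_mul_spStar (G := G)
    (hN.smul (inv_nonneg.2 hcard.le)) fun i => by
      rw [Matrix.smul_apply, smul_eq_mul, inv_mul_le_one₀ hcard]
      exact hNd i
  have hsq : (adjMat G * N).trace = -‖N‖ ^ 2 := by
    rw [add_mul] at hANN
    rw [eq_neg_of_add_eq_zero_left hANN, Matrix.trace_neg, frobenius_norm_sq_eq_trace,
      hN.isHermitian.eq]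
  rwa [Matrix.mul_smul, Matrix.trace_smul, hsq, smul_eq_mul, mul_neg, neg_neg,
    inv_mul_le_iff₀ hcard] at h

lemma sum_neighborFinset_sum_neighborFinset_adjMat [DecidableRel G.Adj] (v : V) :
    ∑ i ∈ G.neighborFinset v, ∑ j ∈ G.neighborFinset v, adjMat G i j =
      ∑ i, ∑ j, adjMat G v i * adjMat G i j * adjMat G j v := by
  simp only [adjMat_eq_adjMatrix, G.neighborFinset_eq_filter, Finset.sum_filter,
    SimpleGraph.adjMatrix_apply, G.adj_comm _ v]
  refine Finset.sum_congr rfl fun i _ => ?_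
  split_ifs <;> simp

lemma trace_submatrix_adjMat_pow_three_le [DecidableEq V] [DecidableRel G.Adj] (Z : Finset V) :
    (((adjMat G).submatrix (Subtype.val : Z → V) Subtype.val) ^ 3).trace ≤
      ∑ v ∈ Z, ∑ i ∈ G.neighborFinset v, ∑ j ∈ G.neighborFinset v, adjMat G i j := by
  have hA0 (i j : V) : 0 ≤ adjMat G i j := (adjMat_apply_mem_Icc G i j).1
  calc (((adjMat G).submatrix (Subtype.val : Z → V) Subtype.val) ^ 3).trace
      = ∑ v ∈ Z, ∑ j ∈ Z, ∑ i ∈ Z, adjMat G v i * adjMat G i j * adjMat G j v := by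
        simp only [pow_three', Matrix.trace, Matrix.diag_apply, Matrix.mul_apply,
          Matrix.submatrix_apply, Finset.sum_mul, ← Finset.sum_coe_sort Z]
    _ ≤ ∑ v ∈ Z, ∑ j, ∑ i, adjMat G v i * adjMat G i j * adjMat G j v := by
        gcongr with v _
        exact sum_sum_le_sum_sum_of_subset
          (fun j i => mul_nonneg (mul_nonneg (hA0 v i) (hA0 i j)) (hA0 j v))
          (Finset.subset_univ Z) (Finset.subset_univ Z)
    _ = ∑ v ∈ Z, ∑ i ∈ G.neighborFinset v, ∑ j ∈ G.neighborFinset v, adjMat G i j := by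
        simp only [sum_neighborFinset_sum_neighborFinset_adjMat]
        exact Finset.sum_congr rfl fun v _ => Finset.sum_comm

lemma exists_mem_le_sum_neighborFinset [Nonempty V] [DecidableEq V] [DecidableRel G.Adj]
    {Z : Finset V} {c : ℝ} (hc : 0 < c)
    (h : Fintype.card V * c ≤
      (((adjMat G).submatrix (Subtype.val : Z → V) Subtype.val) ^ 3).trace) :
    ∃ v ∈ Z, c ≤ ∑ i ∈ G.neighborFinset v, ∑ j ∈ G.neighborFinset v, adjMat G i j := by
  have hZ : Z.Nonempty := by
    rw [Finset.nonempty_iff_ne_empty]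
    rintro rfl
    exact (h.trans (trace_submatrix_adjMat_pow_three_le ∅)).not_gt (by
      rw [Finset.sum_empty]; positivity)
  refine Finset.exists_le_of_sum_le hZ ?_
  calc ∑ _v ∈ Z, c = #Z * c := by simp
    _ ≤ Fintype.card V * c := by gcongr; exact Z.card_le_univ
    _ ≤ (((adjMat G).submatrix (Subtype.val : Z → V) Subtype.val) ^ 3).trace := h
    _ ≤ ∑ v ∈ Z, ∑ i ∈ G.neighborFinset v, ∑ j ∈ G.neighborFinset v, adjMat G i j :=
      trace_submatrix_adjMat_pow_three_le Z

end Graph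

section Increment

-- `a` plays the role of `n ^ (1 / 400)`, so that all the exponents below are natural numbers.
variable {V : Type*} [Fintype V] {G : SimpleGraph V} {a : ℝ}

lemma sq_mul_sqrt_le_self {p : ℝ} (hp : 0 ≤ p) (hp1 : p ≤ 1) : p ^ 2 * √p ≤ p := by
  calc p ^ 2 * √p ≤ p ^ 2 * 1 := by gcongr; exact Real.sqrt_le_one.2 hp1
    _ = p * p := by ring
    _ ≤ p := mul_le_of_le_one_left hp hp1

lemma pow_mul_add_one_mul_pow_le (ha : 2 ≤ a) :
    (a ^ 2) ^ 8 * ((a ^ 8 + 1) * a ^ 301) ≤ a ^ 400 := by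
  have ha1 : 1 ≤ a := by linarith
  have h : a ^ 8 + 1 ≤ a ^ 9 := by
    calc a ^ 8 + 1 ≤ a ^ 8 + a ^ 8 := by gcongr; exact one_le_pow₀ ha1
      _ = 2 * a ^ 8 := by ring
      _ ≤ a * a ^ 8 := by gcongr
      _ = a ^ 9 := by ring
  calc (a ^ 2) ^ 8 * ((a ^ 8 + 1) * a ^ 301) ≤ (a ^ 2) ^ 8 * (a ^ 9 * a ^ 301) := by gcongr
    _ = a ^ 326 := by ring
    _ ≤ a ^ 400 := pow_le_pow_right₀ ha1 (by norm_num)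

lemma mul_pow_le_sq_mul_sqrt_mul {n p : ℝ} (ha : 10 ≤ a) (hn : n = a ^ 400) (hp : 0 < p)
    (hp1 : p ≤ 1) (hpa : 1 ≤ p * a ^ 2) : 140000 * a ^ 301 ≤ p ^ 2 * √p * n := by
  have ha1 : 1 ≤ a := by linarith
  have hsqrt : p ≤ √p := Real.le_sqrt_of_sq_le (by nlinarith)
  calc 140000 * a ^ 301 ≤ 10 ^ 6 * a ^ 301 := by gcongr; norm_num
    _ ≤ a ^ 6 * a ^ 301 := by gcongr
    _ = a ^ 307 := by ring
    _ ≤ a ^ 394 := pow_le_pow_right₀ ha1 (by norm_num)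
    _ ≤ (p * a ^ 2) ^ 3 * a ^ 394 := le_mul_of_one_le_left (by positivity) (one_le_pow₀ hpa)
    _ = p ^ 2 * p * n := by rw [hn]; ring
    _ ≤ p ^ 2 * √p * n := by rw [hn]; gcongr

lemma trace_submatrix_adjMat_pow_three_ge [DecidableEq V] {N : Matrix V V ℝ} {Z : Finset V} {p : ℝ}
    (ha : 10 ≤ a) (hn : Fintype.card V = a ^ 400) (hN : N.PosSemidef)
    (hAN : (adjMat G + N).PosSemidef) (htrace : N.trace ≤ a ^ 402) (hnorm : ‖N‖ ≤ a ^ 301)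
    (hdiag : ∀ i ∈ Z, N i i ≤ a ^ 8) (hp : 0 < p) (hp1 : p ≤ 1) (hpa : 1 ≤ p * a ^ 2)
    (hZ : p * (Fintype.card V : ℝ) ^ 2 / 4 ≤ ∑ i ∈ Z, ∑ j ∈ Z, adjMat G i j) :
    p ^ 2 * √p * (Fintype.card V : ℝ) ^ 3 / 20000 ≤
      (((adjMat G).submatrix (Subtype.val : Z → V) Subtype.val) ^ 3).trace := by
  have ha1 : 1 ≤ a := by linarith
  set n : ℝ := (Fintype.card V : ℝ)
  set A := (adjMat G).submatrix (Subtype.val : Z → V) Subtype.val with hAdef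
  set P := (adjMat G + N).submatrix (Subtype.val : Z → V) Subtype.val
  have hA : A ⊙ A = A := by
    rw [hAdef, ← Matrix.submatrix_hadamard, adjMat_hadamard_self]
  have hPdiag (i : Z) : P i i = N i i := by simp [P, adjMat]
  have hPtrace : P.trace ≤ n * a ^ 2 := by
    calc P.trace = ∑ i ∈ Z, N i i := by
          simp only [Matrix.trace, Matrix.diag_apply, hPdiag, Finset.sum_coe_sort Z fun i => N i i]
      _ ≤ N.trace := Finset.sum_le_univ_sum_of_nonneg fun i => hN.diag_nonneg
      _ ≤ a ^ 402 := htrace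
      _ = n * a ^ 2 := by rw [hn]; ring
  have hPA : ‖P - A‖ ≤ a ^ 301 := by
    have : P - A = N.submatrix (Subtype.val : Z → V) Subtype.val := by
      ext i j
      simp [P, A]
    exact this ▸ (frobenius_norm_submatrix_le N Subtype.val_injective).trans hnorm
  have hdefect : (a ^ 2) ^ 8 * ((a ^ 8 + 1) * a ^ 301) ≤ n :=
    (pow_mul_add_one_mul_pow_le (by linarith)).trans_eq hn.symm
  have hAnorm : p * n ^ 2 / 4 ≤ ‖A‖ ^ 2 := by
    rw [frobenius_norm_sq_of_hadamard_self hA]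
    refine hZ.trans_eq ?_
    simp only [A, Matrix.submatrix_apply, ← Finset.sum_coe_sort Z]
  have herr := mul_pow_le_sq_mul_sqrt_mul ha hn hp hp1 hpa
  have hsmall : a ^ 301 ≤ p * n / 16 := by
    have : p ^ 2 * √p * n ≤ p * n := by gcongr; exact sq_mul_sqrt_le_self hp.le hp1
    linarith [pow_pos (zero_lt_one.trans_le ha1) 301]
  have h := trace_cube_ge_of_near_psd hA (hAN.submatrix _) (by rw [hn]; positivity)
    (by rw [Fintype.card_coe]; exact Nat.cast_le.2 Z.card_le_univ) (by positivity)
    (fun i => (hPdiag i).trans_le (hdiag i i.2)) hPtrace hPA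
    hdefect hp hp1 hAnorm hsmall
  have herr' : n ^ 2 * (140000 * a ^ 301) ≤ n ^ 2 * (p ^ 2 * √p * n) := by gcongr
  have : 0 ≤ p ^ 2 * √p * n ^ 3 := by positivity
  linarith

lemma exists_finset_sum_sum_adjMat_ge {D : V → ℝ} (ha : 10 ≤ a) (hn : Fintype.card V = a ^ 400)
    (hpa : 1 ≤ density G * a ^ 2) (hD : ∀ i, 0 ≤ D i) (hDsum : ∑ i, D i ≤ a ^ 402)
    (hsparse : ∀ S : Finset V, (Fintype.card V : ℝ) / 8 ≤ #S →
      density (G.induce (S : Set V)) ≤ 2 * density G) :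
    ∃ Z : Finset V, (∀ i ∈ Z, ∑ j, adjMat G i j ≤ 64 * density G * Fintype.card V) ∧
      (∀ i ∈ Z, D i ≤ a ^ 8) ∧
      density G * (Fintype.card V : ℝ) ^ 2 / 4 ≤ ∑ i ∈ Z, ∑ j ∈ Z, adjMat G i j := by
  have hp : 0 < density G := pos_of_mul_pos_left (zero_lt_one.trans_le hpa) (by positivity)
  have hn' : (10000 : ℝ) ≤ Fintype.card V := by
    calc (10000 : ℝ) = 10 ^ 4 := by norm_num
      _ ≤ a ^ 4 := by gcongr
      _ ≤ a ^ 400 := pow_le_pow_right₀ (by linarith) (by norm_num)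
      _ = Fintype.card V := hn.symm
  have hheavy := sum_heavy_rows_le (fun i j => (adjMat_apply_mem_Icc G i j).1) hp
    (by exact_mod_cast hn') (density_mul_card_sq G).symm fun S hS => by
      rw [← density_induce_mul_card_sq]
      exact mul_le_mul_of_nonneg_right (hsparse S hS) (by positivity)
  refine exists_finset_sum_sum_ge (adjMat_apply_comm G) (adjMat_apply_mem_Icc G) hD
    (by positivity) (density_mul_card_sq G).symm hheavy ?_
  calc 24 * ∑ i, D i ≤ 24 * a ^ 402 := by gcongr
    _ ≤ 10 ^ 4 * a ^ 402 := by gcongr; norm_num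
    _ ≤ a ^ 4 * a ^ 402 := by gcongr
    _ ≤ (density G * a ^ 2) * (a ^ 4 * a ^ 402) := le_mul_of_one_le_left (by positivity) hpa
    _ = a ^ 8 * (density G * Fintype.card V) := by rw [hn]; ring

lemma exists_sum_sum_adjMat_ge (ha : 10 ≤ a) (hn : Fintype.card V = a ^ 400)
    (hpa : 1 ≤ density G * a ^ 2) (hsp : 2 * spStar G ≤ a ^ 402)
    (hsparse : ∀ S : Finset V, (Fintype.card V : ℝ) / 8 ≤ #S →
      density (G.induce (S : Set V)) ≤ 2 * density G) :
    ∃ T : Finset V, #T ≤ 64 * density G * Fintype.card V ∧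
      density G ^ 2 * √(density G) * (Fintype.card V : ℝ) ^ 2 / 20000 ≤
        ∑ i ∈ T, ∑ j ∈ T, adjMat G i j := by
  classical
  have : 0 < a := by linarith
  have hp : 0 < density G := pos_of_mul_pos_left (zero_lt_one.trans_le hpa) (by positivity)
  have hn0 : (0 : ℝ) < Fintype.card V := by rw [hn]; positivity
  have : Nonempty V := Fintype.card_pos_iff.1 (by exact_mod_cast hn0)
  obtain ⟨N, hN, hAN, hNtrace, hNnorm⟩ := exists_posSemidef_add_adjMat (G := G)
  have hNnorm' : ‖N‖ ≤ a ^ 301 := by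
    refine le_of_sq_le_sq (hNnorm.trans ?_) (by positivity)
    rw [hn, show a ^ 400 = (a ^ 200) ^ 2 by ring, Real.sqrt_sq (by positivity)]
    calc a ^ 200 * (2 * spStar G) ≤ a ^ 200 * a ^ 402 := by gcongr
      _ = (a ^ 301) ^ 2 := by ring
  obtain ⟨Z, hZdeg, hZdiag, hZ⟩ := exists_finset_sum_sum_adjMat_ge (D := N.diag) ha hn hpa
    (fun i => hN.diag_nonneg) (hNtrace.trans hsp) hsparse
  have htrace := trace_submatrix_adjMat_pow_three_ge ha hn hN hAN (hNtrace.trans hsp) hNnorm'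
    hZdiag hp (density_le_one G) hpa hZ
  obtain ⟨v, hv, hTv⟩ := exists_mem_le_sum_neighborFinset
    (c := density G ^ 2 * √(density G) * (Fintype.card V : ℝ) ^ 2 / 20000) (by positivity)
    (htrace.trans_eq' (by ring))
  exact ⟨G.neighborFinset v, card_neighborFinset_eq_sum_adjMat G v ▸ hZdeg v hv, hTv⟩

lemma exists_induce_density_ge {p : ℝ} {T : Finset V} (hp : 0 < p) (hp1 : p ≤ 1)
    (hpn : 1 ≤ p * Fintype.card V) (hcard : #T ≤ 64 * p * Fintype.card V)
    (hT : p ^ 2 * √p * (Fintype.card V : ℝ) ^ 2 / 20000 ≤ ∑ i ∈ T, ∑ j ∈ T, adjMat G i j) :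
    ∃ S : Finset V, p * Fintype.card V ≤ #S ∧
      (10 : ℝ) ^ (-10 : ℤ) * √p ≤ density (G.induce (S : Set V)) := by
  set n : ℝ := (Fintype.card V : ℝ) with hndef
  have hceil : (⌈p * n⌉₊ : ℝ) < p * n + 1 := Nat.ceil_lt_add_one (by positivity)
  obtain ⟨S, hTS, hS⟩ := Finset.exists_superset_card_eq (s := T) (le_max_left #T ⌈p * n⌉₊)
    (max_le T.card_le_univ (Nat.ceil_le.2 (mul_le_of_le_one_left (by positivity) hp1)))
  have hSge : p * n ≤ #S := (Nat.le_ceil _).trans (by rw [hS]; exact_mod_cast le_max_right _ _)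
  have hSle : #S ≤ 64 * p * n := by
    rw [hS, Nat.cast_max]
    exact max_le hcard (by linarith)
  refine ⟨S, hSge, ?_⟩
  have hS0 : 0 < (#S : ℝ) := by linarith
  refine le_of_mul_le_mul_right ?_ (by positivity : 0 < (#S : ℝ) ^ 2)
  calc (10 : ℝ) ^ (-10 : ℤ) * √p * (#S : ℝ) ^ 2
      ≤ (10 : ℝ) ^ (-10 : ℤ) * √p * (64 * p * n) ^ 2 := by gcongr
    _ = 4096 / 10 ^ 10 * (p ^ 2 * √p * n ^ 2) := by norm_num; ring
    _ ≤ p ^ 2 * √p * n ^ 2 / 20000 := by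
      have : 0 ≤ p ^ 2 * √p * n ^ 2 := by positivity
      linarith
    _ ≤ ∑ i ∈ T, ∑ j ∈ T, adjMat G i j := hT
    _ ≤ ∑ i ∈ S, ∑ j ∈ S, adjMat G i j :=
      sum_sum_le_sum_sum_of_subset (fun i j => (adjMat_apply_mem_Icc G i j).1) hTS hTS
    _ = density (G.induce (S : Set V)) * (#S : ℝ) ^ 2 := (density_induce_mul_card_sq G S).symm

end Increment

end DensityIncrement

open DensityIncrement in
theorem stmt14_general {V : Type*} [Fintype V] (G : SimpleGraph V)
    (hn : 10 ^ 400 ≤ Fintype.card V)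
    (hp : (Fintype.card V : ℝ) ^ (-(1 / 200 : ℝ)) ≤ density G)
    (hsp : spStar G ≤ (1 / 2) * (Fintype.card V : ℝ) ^ ((1 : ℝ) + 1 / 200)) :
    (∃ S : Finset V, (Fintype.card V : ℝ) / 8 ≤ (S.card : ℝ) ∧
        2 * density G ≤ density (G.induce (S : Set V))) ∨
    (∃ S : Finset V, density G * (Fintype.card V : ℝ) ≤ (S.card : ℝ) ∧
        (10 : ℝ) ^ (-10 : ℤ) * Real.sqrt (density G) ≤ density (G.induce (S : Set V))) := by
  set n : ℝ := (Fintype.card V : ℝ) with hndef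
  obtain ⟨a, ha0, han⟩ : ∃ a : ℝ, 0 ≤ a ∧ ∀ k : ℕ, n ^ (k / 400 : ℝ) = a ^ k :=
    ⟨n ^ (1 / 400 : ℝ), by positivity, fun k => by
      rw [← Real.rpow_mul_natCast (by positivity)]; ring_nf⟩
  have hn400 : n = a ^ 400 := by simpa using han 400
  have ha : 10 ≤ a :=
    le_of_pow_le_pow_left₀ (n := 400) (by norm_num) ha0 (by
      rw [← hn400, hndef]; exact_mod_cast hn)
  have hpa : 1 ≤ density G * a ^ 2 := by
    rw [Real.rpow_neg (by positivity), show (1 / 200 : ℝ) = (2 : ℕ) / 400 by norm_num, han] at hp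
    exact (inv_le_iff_one_le_mul₀ (by positivity)).1 hp
  have hsp' : 2 * spStar G ≤ a ^ 402 := by
    rw [show (1 : ℝ) + 1 / 200 = (402 : ℕ) / 400 by norm_num, han] at hsp
    linarith
  have hpn : 1 ≤ density G * n := by
    calc 1 ≤ (density G * a ^ 2) * a ^ 398 :=
          one_le_mul_of_one_le_of_one_le hpa (one_le_pow₀ (by linarith))
      _ = density G * n := by rw [hn400]; ring
  refine or_iff_not_imp_left.2 fun hsparse => ?_
  push Not at hsparse
  obtain ⟨T, hcard, hT⟩ := exists_sum_sum_adjMat_ge ha hn400 hpa hsp' fun S hS => (hsparse S hS).le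
  exact exists_induce_density_ge (pos_of_mul_pos_left (zero_lt_one.trans_le hpa) (by positivity))
    (density_le_one G) hpn hcard hT

-- Fast density increment, with `γ = 1/200`.
theorem stmt14 :
    ∃ n₀ : ℕ, ∀ (n : ℕ), n₀ ≤ n →
      ∀ G : SimpleGraph (Fin n),
        (n : ℝ) ^ (-(1 / 200 : ℝ)) ≤ density G →
        spStar G ≤ (1 / 2) * (n : ℝ) ^ ((1 : ℝ) + 1 / 200) →
        (∃ S : Finset (Fin n), (n : ℝ) / 8 ≤ (S.card : ℝ) ∧
            2 * density G ≤ density (G.induce (S : Set (Fin n)))) ∨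
        (∃ S : Finset (Fin n), density G * (n : ℝ) ≤ (S.card : ℝ) ∧
            (10 : ℝ) ^ (-10 : ℤ) * Real.sqrt (density G) ≤
              density (G.induce (S : Set (Fin n)))) :=
  ⟨10 ^ 400, fun n hn G hp hsp => by
    simpa only [Fintype.card_fin] using stmt14_general G (by simpa only [Fintype.card_fin] using hn)
      (by simpa only [Fintype.card_fin] using hp) (by simpa only [Fintype.card_fin] using hsp)⟩
end
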